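/- Correctness of the combined algorithm Memo-(la,at) (Theorem 8): For every (la,at)-NFA A = (P, Q, q0, F, T), every input string w over Σ, and every position i ∈ {0, …, |w|}, Match-(la,at)_{A,w}(q0, i) = f(Memo-(la,at)^{M0}_{A,A,w}(q0, i)), where f converts results by f(Failure(j)) = Failure and f(SuccessAt(i', K)) = SuccessAt(i') (a top-level call never returns the bare value Success). -/

import Mathlib

namespace RegexMemo

/-! ## Generic runs, `φ`, `sub`, `sub*` -/

variable {α : Type}

/-- `φ_s(ℓ, n)`: the index of the result value of the call at index `ℓ`. -/
def phiAux (isRet : α → Bool) (s : List α) (ℓ n : ℕ) : Option ℕ :=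
  match h : s[ℓ]? with
  | none => none
  | some e =>
    if isRet e then
      if n ≤ 1 then some ℓ
      else phiAux isRet s (ℓ + 1) (n - 1)
    else phiAux isRet s (ℓ + 1) (n + 1)
termination_by s.length - ℓ
decreasing_by
  all_goals
    have hl : ℓ < s.length := by
      by_contra hc
      have : s[ℓ]? = none := List.getElem?_eq_none (by omega)
      simp [this] at h
    omega

/-- `φ_s(ℓ) = φ_s(ℓ, 0)`. -/
def phi (isRet : α → Bool) (s : List α) (ℓ : ℕ) : Option ℕ := phiAux isRet s ℓ 0

/-- `sub(s, ℓ)`: replace the memoization-table invocation at index `ℓ` (an element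
`M(q,i)` together with its immediately following result) by `C(q,i)` followed by the
subsequence `s[ℓ'+1] … s[φ_s(ℓ')]`, where `ℓ'` is the first index with `s[ℓ'] = C(q,i)`.
Here `m2c` maps a memoization element `M(q,i)` to the corresponding call element `C(q,i)`
(and everything else to `none`), and `isRet` recognizes result elements. -/
def subExpand [DecidableEq α] (m2c : α → Option α) (isRet : α → Bool)
    (s : List α) (ℓ : ℕ) : Option (List α) :=
  match s[ℓ]? with
  | some e =>
    match m2c e with
    | some c =>
      match s.findIdx? (· == c) with
      | some ℓ' =>
        match phi isRet s ℓ' with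
        | some m =>
          some (s.take ℓ ++ [c] ++ ((s.drop (ℓ' + 1)).take (m - ℓ')) ++ s.drop (ℓ + 2))
        | none => none
      | none => none
    | none => none
  | none => none

/-- `sub*`: repeatedly locate the first memoization element and expand it,
until no memoization element remains. `SubStar m2c isRet s t` means `sub*(s) = t`. -/
inductive SubStar [DecidableEq α] (m2c : α → Option α) (isRet : α → Bool) :
    List α → List α → Prop where
  | done {s : List α} : s.findIdx? (fun e => (m2c e).isSome) = none →
      SubStar m2c isRet s s
  | step {s s' t : List α} {ℓ : ℕ} :
      s.findIdx? (fun e => (m2c e).isSome) = some ℓ →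
      subExpand m2c isRet s ℓ = some s' →
      SubStar m2c isRet s' t →
      SubStar m2c isRet s t

/-- The number of (recursive) calls recorded in a run: the number of `C`/`M` elements. -/
def callCount (isCall : α → Bool) (s : List α) : ℕ := (s.filter isCall).length

variable {Sigma S : Type}

/-- Results of backtracking matching: `SuccessAt i'` or `Failure`. -/
inductive Result : Type where
  | successAt : ℕ → Result
  | failure : Result
deriving DecidableEq

/-! ## Plain NFAs -/

/-- Transitions of a plain NFA. -/
inductive Trans (Sigma S : Type) : Type where
  | eps : S → Trans Sigma S
  | branch : S → S → Trans Sigma S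
  | char : Sigma → S → Trans Sigma S

/-- A (plain) NFA over the alphabet `Sigma` with (finite) state type `S`:
an initial state, a set of accepting states, and a transition function
(whose value is only relevant on non-accepting states). -/
structure NFA (Sigma S : Type) where
  q0 : S
  F : Set S
  T : S → Trans Sigma S

/-- One ε-step: an `Eps` or `Branch` transition of a non-accepting state. -/
def NFA.epsStep (A : NFA Sigma S) (q q' : S) : Prop :=
  q ∉ A.F ∧ (A.T q = Trans.eps q' ∨ (∃ q'', A.T q = Trans.branch q' q'') ∨
    (∃ q'', A.T q = Trans.branch q'' q'))

/-- The NFA has no ε-loops. -/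
def NFA.NoEpsLoops (A : NFA Sigma S) : Prop :=
  ∀ q : S, ¬ Relation.TransGen A.epsStep q q

open Classical in
/-- The in-degree `#in(q)` of a state of a plain NFA. -/
noncomputable def NFA.inDeg [Fintype S] (A : NFA Sigma S) (q : S) : ℕ :=
  (Finset.univ.filter fun q' : S => q' ∉ A.F ∧ A.T q' = Trans.eps q).card +
  (Finset.univ.filter fun q' : S => q' ∉ A.F ∧ ∃ σ, A.T q' = Trans.char σ q).card +
  (Finset.univ.filter fun q' : S => q' ∉ A.F ∧ ∃ q'', A.T q' = Trans.branch q q'').card +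
  (Finset.univ.filter fun q' : S => q' ∉ A.F ∧ ∃ q'', A.T q' = Trans.branch q'' q).card +
  (if q = A.q0 then 1 else 0)

/-- The maximal in-degree `#in(A)` of a plain NFA. -/
noncomputable def NFA.inDegMax [Fintype S] (A : NFA Sigma S) : ℕ :=
  Finset.univ.sup fun q : S => A.inDeg q

/-- Elements of runs of `Match`/`Memo`: calls `C(q,i)`, memoization-table invocations
`M(q,i)`, and results `S(i')` and `F`. -/
inductive RunElem (S : Type) : Type where
  | call : S → ℕ → RunElem S
  | memo : S → ℕ → RunElem S
  | succ : ℕ → RunElem S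
  | fail : RunElem S
deriving DecidableEq

/-- The run element recording the return of a result. -/
def Result.elem {S : Type} : Result → RunElem S
  | .successAt i => .succ i
  | .failure => .fail

def RunElem.isRet : RunElem S → Bool
  | .succ _ => true
  | .fail => true
  | _ => false

def RunElem.isCall : RunElem S → Bool
  | .call _ _ => true
  | .memo _ _ => true
  | _ => false

/-- `M(q,i) ↦ C(q,i)`. -/
def memoToCall : RunElem S → Option (RunElem S)
  | .memo q i => some (.call q i)
  | _ => none

/-- Big-step semantics (together with the produced run) of the backtracking
matching algorithm `Match` for plain NFAs:
`MatchRun A w q i r s` means the call `Match_{A,w}(q, i)` terminates with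
result `r` and produces the run `s`. -/
inductive MatchRun (A : NFA Sigma S) (w : List Sigma) :
    S → ℕ → Result → List (RunElem S) → Prop where
  | accept {q : S} {i : ℕ} : q ∈ A.F →
      MatchRun A w q i (.successAt i) [.call q i, .succ i]
  | eps {q q' : S} {i : ℕ} {r : Result} {s : List (RunElem S)} :
      q ∉ A.F → A.T q = Trans.eps q' →
      MatchRun A w q' i r s →
      MatchRun A w q i r (.call q i :: s ++ [r.elem])
  | branchSucc {q q' q'' : S} {i i' : ℕ} {s : List (RunElem S)} :
      q ∉ A.F → A.T q = Trans.branch q' q'' →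
      MatchRun A w q' i (.successAt i') s →
      MatchRun A w q i (.successAt i') (.call q i :: s ++ [RunElem.succ i'])
  | branchFail {q q' q'' : S} {i : ℕ} {r : Result} {s s' : List (RunElem S)} :
      q ∉ A.F → A.T q = Trans.branch q' q'' →
      MatchRun A w q' i .failure s →
      MatchRun A w q'' i r s' →
      MatchRun A w q i r (.call q i :: s ++ s' ++ [r.elem])
  | charSucc {q q' : S} {σ : Sigma} {i : ℕ} {r : Result} {s : List (RunElem S)} :
      q ∉ A.F → A.T q = Trans.char σ q' →
      w[i]? = some σ →
      MatchRun A w q' (i + 1) r s →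
      MatchRun A w q i r (.call q i :: s ++ [r.elem])
  | charFail {q q' : S} {σ : Sigma} {i : ℕ} :
      q ∉ A.F → A.T q = Trans.char σ q' →
      w[i]? ≠ some σ →
      MatchRun A w q i .failure [.call q i, .fail]

/-- Record `M(q,i) := Failure` in the memoization table if the result is a failure. -/
def recFail [DecidableEq S] (M : S × ℕ → Bool) (q : S) (i : ℕ) : Result → (S × ℕ → Bool)
  | .failure => fun p => if p = (q, i) then true else M p
  | _ => M

/-- Big-step semantics (with resulting memoization table and produced run) of the
memoized backtracking matching algorithm `Memo` for plain NFAs: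
`MemoRun A w q i M M' r s` means the call `Memo^M_{A,w}(q, i)` terminates with result
`r`, final memoization table `M'` (where `M p = true` means `Failure` is recorded at the
key `p`), and produces the run `s`. -/
inductive MemoRun [DecidableEq S] (A : NFA Sigma S) (w : List Sigma) :
    S → ℕ → (S × ℕ → Bool) → (S × ℕ → Bool) → Result → List (RunElem S) → Prop where
  | memoHit {q : S} {i : ℕ} {M : S × ℕ → Bool} : M (q, i) = true →
      MemoRun A w q i M M .failure [.memo q i, .fail]
  | accept {q : S} {i : ℕ} {M : S × ℕ → Bool} : M (q, i) = false → q ∈ A.F →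
      MemoRun A w q i M M (.successAt i) [.call q i, .succ i]
  | eps {q q' : S} {i : ℕ} {M M' : S × ℕ → Bool} {r : Result} {s : List (RunElem S)} :
      M (q, i) = false → q ∉ A.F → A.T q = Trans.eps q' →
      MemoRun A w q' i M M' r s →
      MemoRun A w q i M (recFail M' q i r) r (.call q i :: s ++ [r.elem])
  | branchSucc {q q' q'' : S} {i i' : ℕ} {M M' : S × ℕ → Bool} {s : List (RunElem S)} :
      M (q, i) = false → q ∉ A.F → A.T q = Trans.branch q' q'' →
      MemoRun A w q' i M M' (.successAt i') s →
      MemoRun A w q i M M' (.successAt i') (.call q i :: s ++ [RunElem.succ i'])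
  | branchFail {q q' q'' : S} {i : ℕ} {M M' M'' : S × ℕ → Bool} {r : Result}
      {s s' : List (RunElem S)} :
      M (q, i) = false → q ∉ A.F → A.T q = Trans.branch q' q'' →
      MemoRun A w q' i M M' .failure s →
      MemoRun A w q'' i M' M'' r s' →
      MemoRun A w q i M (recFail M'' q i r) r (.call q i :: s ++ s' ++ [r.elem])
  | charSucc {q q' : S} {σ : Sigma} {i : ℕ} {M M' : S × ℕ → Bool} {r : Result}
      {s : List (RunElem S)} :
      M (q, i) = false → q ∉ A.F → A.T q = Trans.char σ q' →
      w[i]? = some σ →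
      MemoRun A w q' (i + 1) M M' r s →
      MemoRun A w q i M (recFail M' q i r) r (.call q i :: s ++ [r.elem])
  | charFail {q q' : S} {σ : Sigma} {i : ℕ} {M : S × ℕ → Bool} :
      M (q, i) = false → q ∉ A.F → A.T q = Trans.char σ q' →
      w[i]? ≠ some σ →
      MemoRun A w q i M (recFail M q i .failure) .failure [.call q i, .fail]

/-! ## NFAs with sub-automata -/

/-- Kind labels of sub-automaton transitions: positive/negative look-ahead/look-behind
and atomic grouping. -/
inductive Kind : Type where
  | pla | nla | plb | nlb | at
deriving DecidableEq

mutual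
/-- An NFA with sub-automata `⟨Q, q0, F, T⟩`: a list of top-level states, an initial
state, accepting states, and a transition function (relevant on non-accepting top-level
states) whose transitions may be labelled with further NFAs with sub-automata. -/
inductive SubNFA (Sigma S : Type) : Type where
  | mk : List S → S → List S → (S → SubTrans Sigma S) → SubNFA Sigma S

/-- Transitions of an NFA with sub-automata. -/
inductive SubTrans (Sigma S : Type) : Type where
  | eps : S → SubTrans Sigma S
  | branch : S → S → SubTrans Sigma S
  | char : Sigma → S → SubTrans Sigma S
  | sub : Kind → SubNFA Sigma S → S → SubTrans Sigma S
end

/-- Top-level states `Q`. -/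
def SubNFA.Q : SubNFA Sigma S → List S
  | .mk Q _ _ _ => Q

/-- Initial state `q0`. -/
def SubNFA.q0 : SubNFA Sigma S → S
  | .mk _ q0 _ _ => q0

/-- Accepting states `F`. -/
def SubNFA.F : SubNFA Sigma S → List S
  | .mk _ _ F _ => F

/-- Transition function `T`. -/
def SubNFA.T : SubNFA Sigma S → S → SubTrans Sigma S
  | .mk _ _ _ T => T

mutual
/-- All automata occurring within an NFA with sub-automata (including itself), each
together with its nesting depth of atomic grouping (the number of enclosing
`at`-sub-automaton boundaries). -/
def SubNFA.compsD : SubNFA Sigma S → List (SubNFA Sigma S × ℕ)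
  | .mk Q q0 F T => (.mk Q q0 F T, 0) :: Q.flatMap (fun q => SubTrans.subCompsD (T q))

def SubTrans.subCompsD : SubTrans Sigma S → List (SubNFA Sigma S × ℕ)
  | .sub k A' _ => (SubNFA.compsD A').map (fun p => (p.1, p.2 + (if k = Kind.at then 1 else 0)))
  | _ => []
end

/-- All automata occurring within `A` (including `A` itself). -/
def SubNFA.comps (A : SubNFA Sigma S) : List (SubNFA Sigma S) :=
  A.compsD.map Prod.fst

/-- The set (list) of all states `P` occurring within `A`. -/
def SubNFA.allStates (A : SubNFA Sigma S) : List S :=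
  A.comps.flatMap SubNFA.Q

/-- The nesting depth of atomic grouping `ν_A(q)` of a state `q` of `A`. -/
def SubNFA.nu [DecidableEq S] (A : SubNFA Sigma S) (q : S) : ℕ :=
  (A.compsD.map (fun p => if q ∈ p.1.Q then p.2 else 0)).sum

/-- The maximal nesting depth of atomic grouping `ν(A)`. -/
def SubNFA.nuMax [DecidableEq S] (A : SubNFA Sigma S) : ℕ :=
  (A.allStates.map A.nu).foldr max 0

/-- Local wellformedness of one automaton: the initial state is a top-level state,
accepting states are top-level states, and transitions of non-accepting top-level
states lead to top-level states. -/
def SubNFA.LocalOK (B : SubNFA Sigma S) : Prop :=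
  B.q0 ∈ B.Q ∧ (∀ f ∈ B.F, f ∈ B.Q) ∧ ∀ q ∈ B.Q, q ∉ B.F →
    match B.T q with
    | .eps q' => q' ∈ B.Q
    | .branch q' q'' => q' ∈ B.Q ∧ q'' ∈ B.Q
    | .char _ q' => q' ∈ B.Q
    | .sub _ _ q' => q' ∈ B.Q

/-- Wellformedness of an NFA with sub-automata: every component automaton is locally
wellformed, and all the state lists are disjoint and duplicate-free (so that `P` is
the disjoint union of the top-level state sets of all components). -/
def SubNFA.WF (A : SubNFA Sigma S) : Prop :=
  (∀ B ∈ A.comps, B.LocalOK) ∧ A.allStates.Nodup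

/-- The kind labels of all sub-automaton transitions occurring in `A`. -/
def SubNFA.kinds [DecidableEq S] (A : SubNFA Sigma S) : List Kind :=
  A.comps.flatMap fun B =>
    (B.Q.filter (fun q => decide (q ∉ B.F))).filterMap fun q =>
      match B.T q with
      | .sub k _ _ => some k
      | _ => none

/-- A la-NFA: all kind labels are look-around labels (for simplicity, only positive
look-ahead `pla` is treated). -/
def SubNFA.IsLaNFA [DecidableEq S] (A : SubNFA Sigma S) : Prop :=
  ∀ k ∈ A.kinds, k = Kind.pla

/-- An at-NFA: all kind labels are `at` (atomic grouping). -/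
def SubNFA.IsAtNFA [DecidableEq S] (A : SubNFA Sigma S) : Prop :=
  ∀ k ∈ A.kinds, k = Kind.at

/-- A (la,at)-NFA in which (for simplicity) only the kinds `pla` and `at` occur. -/
def SubNFA.IsLaAtNFA [DecidableEq S] (A : SubNFA Sigma S) : Prop :=
  ∀ k ∈ A.kinds, k = Kind.pla ∨ k = Kind.at

/-- One global ε-step of an NFA with sub-automata: an `Eps` or `Branch` transition, or a
`Sub` transition with a look-around kind (from the transition's source to its successor),
of a non-accepting top-level state of any component automaton. -/
def SubNFA.epsStep (A : SubNFA Sigma S) (q q' : S) : Prop :=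
  ∃ B ∈ A.comps, q ∈ B.Q ∧ q ∉ B.F ∧
    (B.T q = SubTrans.eps q' ∨
     (∃ q'', B.T q = SubTrans.branch q' q'') ∨
     (∃ q'', B.T q = SubTrans.branch q'' q') ∨
     (∃ k A'', B.T q = SubTrans.sub k A'' q' ∧ k ≠ Kind.at))

/-- The NFA with sub-automata has no ε-loops. -/
def SubNFA.NoEpsLoops (A : SubNFA Sigma S) : Prop :=
  ∀ q : S, ¬ Relation.TransGen A.epsStep q q

/-- All pairs (state, transition) of non-accepting top-level states of all component
automata of `A`. -/
def SubNFA.allTransNF [DecidableEq S] (A : SubNFA Sigma S) : List (S × SubTrans Sigma S) :=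
  A.comps.flatMap fun B => (B.Q.filter (fun q => decide (q ∉ B.F))).map fun q => (q, B.T q)

/-- How many of the buckets in the definition of the in-degree of `q` a given
transition contributes to. -/
def SubTrans.hits [DecidableEq S] (t : SubTrans Sigma S) (q : S) : ℕ :=
  match t with
  | .eps q' => if q' = q then 1 else 0
  | .char _ q' => if q' = q then 1 else 0
  | .branch q' q'' => (if q' = q then 1 else 0) + (if q'' = q then 1 else 0)
  | .sub _ _ q' => if q' = q then 1 else 0

/-- The in-degree `#in(q)` of a state of an NFA with sub-automata. -/
def SubNFA.inDeg [DecidableEq S] (A : SubNFA Sigma S) (q : S) : ℕ :=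
  (A.allTransNF.map (fun p => p.2.hits q)).sum +
  (if q ∈ A.comps.map SubNFA.q0 then 1 else 0)

/-- The maximal in-degree `#in(A)`. -/
def SubNFA.inDegMax [DecidableEq S] (A : SubNFA Sigma S) : ℕ :=
  (A.allStates.map A.inDeg).foldr max 0

/-! ## run elements for `Memo-la` and `Match-(la,at)` -/

/-- Elements of runs of `Memo-la` (and of `Match-(la,at)`): calls `C(q,i)`,
memoization-table invocations `M(q,i)`, and the results `S(i')`, `S'` (bare success),
and `F`. -/
inductive LaRunElem (S : Type) : Type where
  | call : S → ℕ → LaRunElem S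
  | memo : S → ℕ → LaRunElem S
  | succAt : ℕ → LaRunElem S
  | succ : LaRunElem S
  | fail : LaRunElem S
deriving DecidableEq

def LaRunElem.isRet : LaRunElem S → Bool
  | .succAt _ => true
  | .succ => true
  | .fail => true
  | _ => false

def LaRunElem.isCall : LaRunElem S → Bool
  | .call _ _ => true
  | .memo _ _ => true
  | _ => false

def laMemoToCall : LaRunElem S → Option (LaRunElem S)
  | .memo q i => some (.call q i)
  | _ => none

def Result.laElem {S : Type} : Result → LaRunElem S
  | .successAt i => .succAt i
  | .failure => .fail

/-! ## The backtracking matching algorithm `Match-(la,at)` -/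

/-- Big-step semantics (with produced run) of the backtracking matching algorithm
`Match-(la,at)` for NFAs with sub-automata: `LAMatchRun w A q i r s` means the call
`Match-(la,at)_{A,w}(q, i)` terminates with result `r` and produces the run `s`.
For simplicity, only the look-around kind `pla` (besides `at`) is treated. -/
inductive LAMatchRun (w : List Sigma) :
    SubNFA Sigma S → S → ℕ → Result → List (LaRunElem S) → Prop where
  | accept {A : SubNFA Sigma S} {q : S} {i : ℕ} : q ∈ A.F →
      LAMatchRun w A q i (.successAt i) [.call q i, .succAt i]
  | eps {A : SubNFA Sigma S} {q q' : S} {i : ℕ} {r : Result} {s : List (LaRunElem S)} :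
      q ∉ A.F → A.T q = SubTrans.eps q' →
      LAMatchRun w A q' i r s →
      LAMatchRun w A q i r (.call q i :: s ++ [r.laElem])
  | branchSucc {A : SubNFA Sigma S} {q q' q'' : S} {i i' : ℕ} {s : List (LaRunElem S)} :
      q ∉ A.F → A.T q = SubTrans.branch q' q'' →
      LAMatchRun w A q' i (.successAt i') s →
      LAMatchRun w A q i (.successAt i') (.call q i :: s ++ [LaRunElem.succAt i'])
  | branchFail {A : SubNFA Sigma S} {q q' q'' : S} {i : ℕ} {r : Result}
      {s s' : List (LaRunElem S)} :
      q ∉ A.F → A.T q = SubTrans.branch q' q'' →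
      LAMatchRun w A q' i .failure s →
      LAMatchRun w A q'' i r s' →
      LAMatchRun w A q i r (.call q i :: s ++ s' ++ [r.laElem])
  | charSucc {A : SubNFA Sigma S} {q q' : S} {σ : Sigma} {i : ℕ} {r : Result}
      {s : List (LaRunElem S)} :
      q ∉ A.F → A.T q = SubTrans.char σ q' →
      w[i]? = some σ →
      LAMatchRun w A q' (i + 1) r s →
      LAMatchRun w A q i r (.call q i :: s ++ [r.laElem])
  | charFail {A : SubNFA Sigma S} {q q' : S} {σ : Sigma} {i : ℕ} :
      q ∉ A.F → A.T q = SubTrans.char σ q' →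
      w[i]? ≠ some σ →
      LAMatchRun w A q i .failure [.call q i, .fail]
  | plaSucc {A A' : SubNFA Sigma S} {q q' : S} {i i' : ℕ} {r : Result}
      {s1 s2 : List (LaRunElem S)} :
      q ∉ A.F → A.T q = SubTrans.sub Kind.pla A' q' →
      LAMatchRun w A' A'.q0 i (.successAt i') s1 →
      LAMatchRun w A q' i r s2 →
      LAMatchRun w A q i r (.call q i :: s1 ++ s2 ++ [r.laElem])
  | plaFail {A A' : SubNFA Sigma S} {q q' : S} {i : ℕ} {s1 : List (LaRunElem S)} :
      q ∉ A.F → A.T q = SubTrans.sub Kind.pla A' q' →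
      LAMatchRun w A' A'.q0 i .failure s1 →
      LAMatchRun w A q i .failure (.call q i :: s1 ++ [LaRunElem.fail])
  | atSucc {A A' : SubNFA Sigma S} {q q' : S} {i i' : ℕ} {r : Result}
      {s1 s2 : List (LaRunElem S)} :
      q ∉ A.F → A.T q = SubTrans.sub Kind.at A' q' →
      LAMatchRun w A' A'.q0 i (.successAt i') s1 →
      LAMatchRun w A q' i' r s2 →
      LAMatchRun w A q i r (.call q i :: s1 ++ s2 ++ [r.laElem])
  | atFail {A A' : SubNFA Sigma S} {q q' : S} {i : ℕ} {s1 : List (LaRunElem S)} :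
      q ∉ A.F → A.T q = SubTrans.sub Kind.at A' q' →
      LAMatchRun w A' A'.q0 i .failure s1 →
      LAMatchRun w A q i .failure (.call q i :: s1 ++ [LaRunElem.fail])

/-! ## `Memo-la` -/

/-- Values of the memoization table of `Memo-la`: `Failure` or `Success`. -/
inductive LaVal : Type where
  | success : LaVal
  | failure : LaVal
deriving DecidableEq

/-- Results of `Memo-la`: `SuccessAt i'`, bare `Success`, or `Failure`. -/
inductive LaResult : Type where
  | successAt : ℕ → LaResult
  | success : LaResult
  | failure : LaResult
deriving DecidableEq

def LaVal.toResult : LaVal → LaResult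
  | .success => .success
  | .failure => .failure

def LaResult.elem {S : Type} : LaResult → LaRunElem S
  | .successAt i => .succAt i
  | .success => .succ
  | .failure => .fail

def Result.toLa : Result → LaResult
  | .successAt i => .successAt i
  | .failure => .failure

/-- The final recording of `Memo-la`: `M(q,i) := Success` if the result is
`SuccessAt i'` or `Success`, and `M(q,i) := Failure` if the result is `Failure`. -/
def laRecord [DecidableEq S] (M : S × ℕ → Option LaVal) (q : S) (i : ℕ) (r : LaResult) :
    S × ℕ → Option LaVal :=
  fun p => if p = (q, i) then
    some (match r with | .failure => LaVal.failure | _ => LaVal.success)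
  else M p

/-- Big-step semantics (with resulting memoization table and produced run) of the
memoized backtracking matching algorithm `Memo-la` for la-NFAs:
`MemoLaRun w A q i M M' r s` means the call `Memo-la^M_{A,w}(q, i)` terminates with
result `r`, final memoization table `M'`, and produces the run `s`. The memoization
table is shared between the top-level automaton and all sub-automata. -/
inductive MemoLaRun [DecidableEq S] (w : List Sigma) :
    SubNFA Sigma S → S → ℕ → (S × ℕ → Option LaVal) → (S × ℕ → Option LaVal) →
    LaResult → List (LaRunElem S) → Prop where
  | memoHit {A : SubNFA Sigma S} {q : S} {i : ℕ} {M : S × ℕ → Option LaVal} {v : LaVal} :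
      M (q, i) = some v →
      MemoLaRun w A q i M M v.toResult [.memo q i, v.toResult.elem]
  | accept {A : SubNFA Sigma S} {q : S} {i : ℕ} {M : S × ℕ → Option LaVal} :
      M (q, i) = none → q ∈ A.F →
      MemoLaRun w A q i M (laRecord M q i (.successAt i)) (.successAt i)
        [.call q i, .succAt i]
  | eps {A : SubNFA Sigma S} {q q' : S} {i : ℕ} {M M' : S × ℕ → Option LaVal}
      {r : LaResult} {s : List (LaRunElem S)} :
      M (q, i) = none → q ∉ A.F → A.T q = SubTrans.eps q' →
      MemoLaRun w A q' i M M' r s →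
      MemoLaRun w A q i M (laRecord M' q i r) r (.call q i :: s ++ [r.elem])
  | branchNoFail {A : SubNFA Sigma S} {q q' q'' : S} {i : ℕ}
      {M M' : S × ℕ → Option LaVal} {r : LaResult} {s : List (LaRunElem S)} :
      M (q, i) = none → q ∉ A.F → A.T q = SubTrans.branch q' q'' →
      MemoLaRun w A q' i M M' r s → r ≠ .failure →
      MemoLaRun w A q i M (laRecord M' q i r) r (.call q i :: s ++ [r.elem])
  | branchFail {A : SubNFA Sigma S} {q q' q'' : S} {i : ℕ}
      {M M1 M2 : S × ℕ → Option LaVal} {r : LaResult} {s1 s2 : List (LaRunElem S)} :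
      M (q, i) = none → q ∉ A.F → A.T q = SubTrans.branch q' q'' →
      MemoLaRun w A q' i M M1 .failure s1 →
      MemoLaRun w A q'' i M1 M2 r s2 →
      MemoLaRun w A q i M (laRecord M2 q i r) r (.call q i :: s1 ++ s2 ++ [r.elem])
  | charSucc {A : SubNFA Sigma S} {q q' : S} {σ : Sigma} {i : ℕ}
      {M M' : S × ℕ → Option LaVal} {r : LaResult} {s : List (LaRunElem S)} :
      M (q, i) = none → q ∉ A.F → A.T q = SubTrans.char σ q' →
      w[i]? = some σ →
      MemoLaRun w A q' (i + 1) M M' r s →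
      MemoLaRun w A q i M (laRecord M' q i r) r (.call q i :: s ++ [r.elem])
  | charFail {A : SubNFA Sigma S} {q q' : S} {σ : Sigma} {i : ℕ}
      {M : S × ℕ → Option LaVal} :
      M (q, i) = none → q ∉ A.F → A.T q = SubTrans.char σ q' →
      w[i]? ≠ some σ →
      MemoLaRun w A q i M (laRecord M q i .failure) .failure [.call q i, .fail]
  | plaSucc {A A' : SubNFA Sigma S} {q q' : S} {i : ℕ}
      {M M1 M2 : S × ℕ → Option LaVal} {r1 r : LaResult} {s1 s2 : List (LaRunElem S)} :
      M (q, i) = none → q ∉ A.F → A.T q = SubTrans.sub Kind.pla A' q' →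
      MemoLaRun w A' A'.q0 i M M1 r1 s1 → r1 ≠ .failure →
      MemoLaRun w A q' i M1 M2 r s2 →
      MemoLaRun w A q i M (laRecord M2 q i r) r (.call q i :: s1 ++ s2 ++ [r.elem])
  | plaFail {A A' : SubNFA Sigma S} {q q' : S} {i : ℕ}
      {M M1 : S × ℕ → Option LaVal} {s1 : List (LaRunElem S)} :
      M (q, i) = none → q ∉ A.F → A.T q = SubTrans.sub Kind.pla A' q' →
      MemoLaRun w A' A'.q0 i M M1 .failure s1 →
      MemoLaRun w A q i M (laRecord M1 q i .failure) .failure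
        (.call q i :: s1 ++ [LaRunElem.fail])

/-! ## `Memo-at` -/

/-- Results of `Memo-at`: `SuccessAt(i', K)` with a set `K` of delayed memoization keys,
or `Failure(j)` with a nesting depth `j`. -/
inductive AtResult (S : Type) : Type where
  | successAt : ℕ → Finset (S × ℕ) → AtResult S
  | failure : ℕ → AtResult S

/-- Elements of runs of `Memo-at`: calls `C(q,i)`, memoization-table invocations
`M(q,i)`, and results `S(i')` and `F(j)`. -/
inductive AtRunElem (S : Type) : Type where
  | call : S → ℕ → AtRunElem S
  | memo : S → ℕ → AtRunElem S
  | succ : ℕ → AtRunElem S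
  | fail : ℕ → AtRunElem S
deriving DecidableEq

def AtRunElem.isRet : AtRunElem S → Bool
  | .succ _ => true
  | .fail _ => true
  | _ => false

def AtRunElem.isCall : AtRunElem S → Bool
  | .call _ _ => true
  | .memo _ _ => true
  | _ => false

def atMemoToCall : AtRunElem S → Option (AtRunElem S)
  | .memo q i => some (.call q i)
  | _ => none

def AtResult.elem {S : Type} : AtResult S → AtRunElem S
  | .successAt i _ => .succ i
  | .failure j => .fail j

/-- `f`, converting results of `Memo-at` to results of `Match-(la,at)`. -/
def AtResult.toResult {S : Type} : AtResult S → Result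
  | .successAt i _ => .successAt i
  | .failure _ => .failure

/-- The final step of `Memo-at`: on success, the key `(q,i)` is added to the set of
delayed keys. -/
def atFinal [DecidableEq S] (q : S) (i : ℕ) : AtResult S → AtResult S
  | .successAt i' K => .successAt i' (insert (q, i) K)
  | .failure j => .failure j

/-- The final recording of `Memo-at`: `M(q,i) := Failure(j)` if the result is
`Failure(j)`. -/
def atRecord [DecidableEq S] (M : S × ℕ → Option ℕ) (q : S) (i : ℕ) :
    AtResult S → (S × ℕ → Option ℕ)
  | .failure j => fun p => if p = (q, i) then some j else M p
  | _ => M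

/-- Batch recording `M(k) := Failure(j)` for every `k ∈ K`. -/
def atBatch [DecidableEq S] (M : S × ℕ → Option ℕ) (K : Finset (S × ℕ)) (j : ℕ) :
    S × ℕ → Option ℕ :=
  fun p => if p ∈ K then some j else M p

/-- Big-step semantics (with resulting memoization table and produced run) of the
memoized backtracking matching algorithm `Memo-at` for at-NFAs:
`MemoAtRun A0 w A q i M M' r s` means the call `Memo-at^M_{A0,A,w}(q, i)` (with the
whole automaton `A0` and current sub-automaton `A`) terminates with result `r`, final
memoization table `M'`, and produces the run `s`. -/
inductive MemoAtRun [DecidableEq S] (A0 : SubNFA Sigma S) (w : List Sigma) :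
    SubNFA Sigma S → S → ℕ → (S × ℕ → Option ℕ) → (S × ℕ → Option ℕ) →
    AtResult S → List (AtRunElem S) → Prop where
  | memoHit {A : SubNFA Sigma S} {q : S} {i j : ℕ} {M : S × ℕ → Option ℕ} :
      M (q, i) = some j →
      MemoAtRun A0 w A q i M M (.failure j) [.memo q i, .fail j]
  | accept {A : SubNFA Sigma S} {q : S} {i : ℕ} {M : S × ℕ → Option ℕ} :
      M (q, i) = none → q ∈ A.F →
      MemoAtRun A0 w A q i M M (.successAt i {(q, i)}) [.call q i, .succ i]
  | eps {A : SubNFA Sigma S} {q q' : S} {i : ℕ} {M M' : S × ℕ → Option ℕ}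
      {r : AtResult S} {s : List (AtRunElem S)} :
      M (q, i) = none → q ∉ A.F → A.T q = SubTrans.eps q' →
      MemoAtRun A0 w A q' i M M' r s →
      MemoAtRun A0 w A q i M (atRecord M' q i r) (atFinal q i r)
        (.call q i :: s ++ [r.elem])
  | branchNoBT {A : SubNFA Sigma S} {q q' q'' : S} {i : ℕ} {M M' : S × ℕ → Option ℕ}
      {r : AtResult S} {s : List (AtRunElem S)} :
      M (q, i) = none → q ∉ A.F → A.T q = SubTrans.branch q' q'' →
      MemoAtRun A0 w A q' i M M' r s →
      (∀ j, r = AtResult.failure j → j ≠ A0.nu q) →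
      MemoAtRun A0 w A q i M (atRecord M' q i r) (atFinal q i r)
        (.call q i :: s ++ [r.elem])
  | branchBTSucc {A : SubNFA Sigma S} {q q' q'' : S} {i i'' : ℕ} {K : Finset (S × ℕ)}
      {M M1 M2 : S × ℕ → Option ℕ} {s1 s2 : List (AtRunElem S)} :
      M (q, i) = none → q ∉ A.F → A.T q = SubTrans.branch q' q'' →
      MemoAtRun A0 w A q' i M M1 (.failure (A0.nu q)) s1 →
      MemoAtRun A0 w A q'' i M1 M2 (.successAt i'' K) s2 →
      MemoAtRun A0 w A q i M M2 (atFinal q i (.successAt i'' K))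
        (.call q i :: s1 ++ s2 ++ [AtRunElem.succ i''])
  | branchBTFail {A : SubNFA Sigma S} {q q' q'' : S} {i j' : ℕ}
      {M M1 M2 : S × ℕ → Option ℕ} {s1 s2 : List (AtRunElem S)} :
      M (q, i) = none → q ∉ A.F → A.T q = SubTrans.branch q' q'' →
      MemoAtRun A0 w A q' i M M1 (.failure (A0.nu q)) s1 →
      MemoAtRun A0 w A q'' i M1 M2 (.failure j') s2 →
      MemoAtRun A0 w A q i M (atRecord M2 q i (.failure (min (A0.nu q) j')))
        (.failure (min (A0.nu q) j'))
        (.call q i :: s1 ++ s2 ++ [AtRunElem.fail (min (A0.nu q) j')])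
  | charSucc {A : SubNFA Sigma S} {q q' : S} {σ : Sigma} {i : ℕ}
      {M M' : S × ℕ → Option ℕ} {r : AtResult S} {s : List (AtRunElem S)} :
      M (q, i) = none → q ∉ A.F → A.T q = SubTrans.char σ q' →
      w[i]? = some σ →
      MemoAtRun A0 w A q' (i + 1) M M' r s →
      MemoAtRun A0 w A q i M (atRecord M' q i r) (atFinal q i r)
        (.call q i :: s ++ [r.elem])
  | charFail {A : SubNFA Sigma S} {q q' : S} {σ : Sigma} {i : ℕ}
      {M : S × ℕ → Option ℕ} :
      M (q, i) = none → q ∉ A.F → A.T q = SubTrans.char σ q' →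
      w[i]? ≠ some σ →
      MemoAtRun A0 w A q i M (atRecord M q i (.failure (A0.nu q)))
        (.failure (A0.nu q)) [.call q i, .fail (A0.nu q)]
  | subSuccSucc {A A' : SubNFA Sigma S} {q q' : S} {i i' i'' : ℕ}
      {K' K'' : Finset (S × ℕ)} {M M1 M2 : S × ℕ → Option ℕ}
      {s1 s2 : List (AtRunElem S)} :
      M (q, i) = none → q ∉ A.F → A.T q = SubTrans.sub Kind.at A' q' →
      MemoAtRun A0 w A' A'.q0 i M M1 (.successAt i' K') s1 →
      MemoAtRun A0 w A q' i' M1 M2 (.successAt i'' K'') s2 →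
      MemoAtRun A0 w A q i M M2 (atFinal q i (.successAt i'' (K' ∪ K'')))
        (.call q i :: s1 ++ s2 ++ [AtRunElem.succ i''])
  | subSuccFail {A A' : SubNFA Sigma S} {q q' : S} {i i' j : ℕ} {K' : Finset (S × ℕ)}
      {M M1 M2 : S × ℕ → Option ℕ} {s1 s2 : List (AtRunElem S)} :
      M (q, i) = none → q ∉ A.F → A.T q = SubTrans.sub Kind.at A' q' →
      MemoAtRun A0 w A' A'.q0 i M M1 (.successAt i' K') s1 →
      MemoAtRun A0 w A q' i' M1 M2 (.failure j) s2 →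
      MemoAtRun A0 w A q i M (atRecord (atBatch M2 K' j) q i (.failure j)) (.failure j)
        (.call q i :: s1 ++ s2 ++ [AtRunElem.fail j])
  | subFailHigh {A A' : SubNFA Sigma S} {q q' : S} {i j : ℕ}
      {M M1 : S × ℕ → Option ℕ} {s1 : List (AtRunElem S)} :
      M (q, i) = none → q ∉ A.F → A.T q = SubTrans.sub Kind.at A' q' →
      MemoAtRun A0 w A' A'.q0 i M M1 (.failure j) s1 →
      A0.nu q < j →
      MemoAtRun A0 w A q i M (atRecord M1 q i (.failure (A0.nu q)))
        (.failure (A0.nu q)) (.call q i :: s1 ++ [AtRunElem.fail (A0.nu q)])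
  | subFailLow {A A' : SubNFA Sigma S} {q q' : S} {i j : ℕ}
      {M M1 : S × ℕ → Option ℕ} {s1 : List (AtRunElem S)} :
      M (q, i) = none → q ∉ A.F → A.T q = SubTrans.sub Kind.at A' q' →
      MemoAtRun A0 w A' A'.q0 i M M1 (.failure j) s1 →
      j ≤ A0.nu q →
      MemoAtRun A0 w A q i M (atRecord M1 q i (.failure j)) (.failure j)
        (.call q i :: s1 ++ [AtRunElem.fail j])

/-! ## The combined algorithm `Memo-(la,at)` -/

/-- Values of the memoization table of `Memo-(la,at)`: `Success` or `Failure(j)`. -/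
inductive LaAtVal : Type where
  | success : LaAtVal
  | failure : ℕ → LaAtVal

/-- Results of `Memo-(la,at)`: `SuccessAt(i', K)`, bare `Success`, or `Failure(j)`. -/
inductive LaAtResult (S : Type) : Type where
  | successAt : ℕ → Finset (S × ℕ) → LaAtResult S
  | success : LaAtResult S
  | failure : ℕ → LaAtResult S

def LaAtVal.toResult {S : Type} : LaAtVal → LaAtResult S
  | .success => .success
  | .failure j => .failure j

/-- `f`, converting results of `Memo-(la,at)` to results of `Match-(la,at)`
(undefined on the bare value `Success`). -/
def LaAtResult.toResult? {S : Type} : LaAtResult S → Option Result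
  | .successAt i _ => some (.successAt i)
  | .success => none
  | .failure _ => some .failure

def laAtFinal [DecidableEq S] (q : S) (i : ℕ) : LaAtResult S → LaAtResult S
  | .successAt i' K => .successAt i' (insert (q, i) K)
  | r => r

def laAtRecord [DecidableEq S] (M : S × ℕ → Option LaAtVal) (q : S) (i : ℕ) :
    LaAtResult S → (S × ℕ → Option LaAtVal)
  | .successAt _ _ => M
  | .success => fun p => if p = (q, i) then some LaAtVal.success else M p
  | .failure j => fun p => if p = (q, i) then some (LaAtVal.failure j) else M p

def laAtBatch [DecidableEq S] (M : S × ℕ → Option LaAtVal) (K : Finset (S × ℕ))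
    (v : LaAtVal) : S × ℕ → Option LaAtVal :=
  fun p => if p ∈ K then some v else M p

/-- Big-step semantics (with resulting memoization table and the number of recursive
calls made) of the combined memoized backtracking matching algorithm `Memo-(la,at)`:
`MemoLaAtRun w A0 A q i M M' r n` means the call `Memo-(la,at)^M_{A0,A,w}(q, i)`
terminates with result `r`, final memoization table `M'`, making `n` calls in total.
On a positive look-ahead transition, the sub-automaton becomes the new whole automaton
(so nesting depths of atomic grouping are reset by look-around operators). -/
inductive MemoLaAtRun [DecidableEq S] (w : List Sigma) :
    SubNFA Sigma S → SubNFA Sigma S → S → ℕ →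
    (S × ℕ → Option LaAtVal) → (S × ℕ → Option LaAtVal) → LaAtResult S → ℕ → Prop where
  | memoHit {A0 A : SubNFA Sigma S} {q : S} {i : ℕ} {M : S × ℕ → Option LaAtVal}
      {v : LaAtVal} :
      M (q, i) = some v →
      MemoLaAtRun w A0 A q i M M v.toResult 1
  | accept {A0 A : SubNFA Sigma S} {q : S} {i : ℕ} {M : S × ℕ → Option LaAtVal} :
      M (q, i) = none → q ∈ A.F →
      MemoLaAtRun w A0 A q i M M (.successAt i {(q, i)}) 1
  | eps {A0 A : SubNFA Sigma S} {q q' : S} {i : ℕ} {M M' : S × ℕ → Option LaAtVal}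
      {r : LaAtResult S} {n : ℕ} :
      M (q, i) = none → q ∉ A.F → A.T q = SubTrans.eps q' →
      MemoLaAtRun w A0 A q' i M M' r n →
      MemoLaAtRun w A0 A q i M (laAtRecord M' q i (laAtFinal q i r)) (laAtFinal q i r)
        (n + 1)
  | branchNoBT {A0 A : SubNFA Sigma S} {q q' q'' : S} {i : ℕ}
      {M M' : S × ℕ → Option LaAtVal} {r : LaAtResult S} {n : ℕ} :
      M (q, i) = none → q ∉ A.F → A.T q = SubTrans.branch q' q'' →
      MemoLaAtRun w A0 A q' i M M' r n →
      (∀ j, r = LaAtResult.failure j → j ≠ A0.nu q) →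
      MemoLaAtRun w A0 A q i M (laAtRecord M' q i (laAtFinal q i r)) (laAtFinal q i r)
        (n + 1)
  | branchBTFail {A0 A : SubNFA Sigma S} {q q' q'' : S} {i j' : ℕ}
      {M M1 M2 : S × ℕ → Option LaAtVal} {n1 n2 : ℕ} :
      M (q, i) = none → q ∉ A.F → A.T q = SubTrans.branch q' q'' →
      MemoLaAtRun w A0 A q' i M M1 (.failure (A0.nu q)) n1 →
      MemoLaAtRun w A0 A q'' i M1 M2 (.failure j') n2 →
      MemoLaAtRun w A0 A q i M
        (laAtRecord M2 q i (.failure (min (A0.nu q) j')))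
        (.failure (min (A0.nu q) j')) (n1 + n2 + 1)
  | branchBTOther {A0 A : SubNFA Sigma S} {q q' q'' : S} {i : ℕ}
      {M M1 M2 : S × ℕ → Option LaAtVal} {r : LaAtResult S} {n1 n2 : ℕ} :
      M (q, i) = none → q ∉ A.F → A.T q = SubTrans.branch q' q'' →
      MemoLaAtRun w A0 A q' i M M1 (.failure (A0.nu q)) n1 →
      MemoLaAtRun w A0 A q'' i M1 M2 r n2 →
      (∀ j, r ≠ LaAtResult.failure j) →
      MemoLaAtRun w A0 A q i M (laAtRecord M2 q i (laAtFinal q i r)) (laAtFinal q i r)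
        (n1 + n2 + 1)
  | charSucc {A0 A : SubNFA Sigma S} {q q' : S} {σ : Sigma} {i : ℕ}
      {M M' : S × ℕ → Option LaAtVal} {r : LaAtResult S} {n : ℕ} :
      M (q, i) = none → q ∉ A.F → A.T q = SubTrans.char σ q' →
      w[i]? = some σ →
      MemoLaAtRun w A0 A q' (i + 1) M M' r n →
      MemoLaAtRun w A0 A q i M (laAtRecord M' q i (laAtFinal q i r)) (laAtFinal q i r)
        (n + 1)
  | charFail {A0 A : SubNFA Sigma S} {q q' : S} {σ : Sigma} {i : ℕ}
      {M : S × ℕ → Option LaAtVal} :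
      M (q, i) = none → q ∉ A.F → A.T q = SubTrans.char σ q' →
      w[i]? ≠ some σ →
      MemoLaAtRun w A0 A q i M (laAtRecord M q i (.failure (A0.nu q)))
        (.failure (A0.nu q)) 1
  | plaSuccAt {A0 A A' : SubNFA Sigma S} {q q' : S} {i i' : ℕ} {K' : Finset (S × ℕ)}
      {M M1 M2 : S × ℕ → Option LaAtVal} {r : LaAtResult S} {n1 n2 : ℕ} :
      M (q, i) = none → q ∉ A.F → A.T q = SubTrans.sub Kind.pla A' q' →
      MemoLaAtRun w A' A' A'.q0 i M M1 (.successAt i' K') n1 →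
      MemoLaAtRun w A0 A q' i (laAtBatch M1 K' LaAtVal.success) M2 r n2 →
      MemoLaAtRun w A0 A q i M (laAtRecord M2 q i (laAtFinal q i r)) (laAtFinal q i r)
        (n1 + n2 + 1)
  | plaBare {A0 A A' : SubNFA Sigma S} {q q' : S} {i : ℕ}
      {M M1 M2 : S × ℕ → Option LaAtVal} {r : LaAtResult S} {n1 n2 : ℕ} :
      M (q, i) = none → q ∉ A.F → A.T q = SubTrans.sub Kind.pla A' q' →
      MemoLaAtRun w A' A' A'.q0 i M M1 .success n1 →
      MemoLaAtRun w A0 A q' i M1 M2 r n2 →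
      MemoLaAtRun w A0 A q i M (laAtRecord M2 q i (laAtFinal q i r)) (laAtFinal q i r)
        (n1 + n2 + 1)
  | plaFail {A0 A A' : SubNFA Sigma S} {q q' : S} {i j : ℕ}
      {M M1 : S × ℕ → Option LaAtVal} {n1 : ℕ} :
      M (q, i) = none → q ∉ A.F → A.T q = SubTrans.sub Kind.pla A' q' →
      MemoLaAtRun w A' A' A'.q0 i M M1 (.failure j) n1 →
      MemoLaAtRun w A0 A q i M (laAtRecord M1 q i (.failure (A0.nu q)))
        (.failure (A0.nu q)) (n1 + 1)
  | atSuccSucc {A0 A A' : SubNFA Sigma S} {q q' : S} {i i' i'' : ℕ}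
      {K' K'' : Finset (S × ℕ)} {M M1 M2 : S × ℕ → Option LaAtVal} {n1 n2 : ℕ} :
      M (q, i) = none → q ∉ A.F → A.T q = SubTrans.sub Kind.at A' q' →
      MemoLaAtRun w A0 A' A'.q0 i M M1 (.successAt i' K') n1 →
      MemoLaAtRun w A0 A q' i' M1 M2 (.successAt i'' K'') n2 →
      MemoLaAtRun w A0 A q i M M2
        (laAtFinal q i (.successAt i'' (K' ∪ K''))) (n1 + n2 + 1)
  | atSuccBare {A0 A A' : SubNFA Sigma S} {q q' : S} {i i' : ℕ} {K' : Finset (S × ℕ)}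
      {M M1 M2 : S × ℕ → Option LaAtVal} {n1 n2 : ℕ} :
      M (q, i) = none → q ∉ A.F → A.T q = SubTrans.sub Kind.at A' q' →
      MemoLaAtRun w A0 A' A'.q0 i M M1 (.successAt i' K') n1 →
      MemoLaAtRun w A0 A q' i' M1 M2 .success n2 →
      MemoLaAtRun w A0 A q i M
        (laAtRecord (laAtBatch M2 K' LaAtVal.success) q i .success) .success
        (n1 + n2 + 1)
  | atSuccFail {A0 A A' : SubNFA Sigma S} {q q' : S} {i i' j : ℕ} {K' : Finset (S × ℕ)}
      {M M1 M2 : S × ℕ → Option LaAtVal} {n1 n2 : ℕ} :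
      M (q, i) = none → q ∉ A.F → A.T q = SubTrans.sub Kind.at A' q' →
      MemoLaAtRun w A0 A' A'.q0 i M M1 (.successAt i' K') n1 →
      MemoLaAtRun w A0 A q' i' M1 M2 (.failure j) n2 →
      MemoLaAtRun w A0 A q i M
        (laAtRecord (laAtBatch M2 K' (LaAtVal.failure j)) q i (.failure j))
        (.failure j) (n1 + n2 + 1)
  | atBare {A0 A A' : SubNFA Sigma S} {q q' : S} {i : ℕ}
      {M M1 : S × ℕ → Option LaAtVal} {n1 : ℕ} :
      M (q, i) = none → q ∉ A.F → A.T q = SubTrans.sub Kind.at A' q' →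
      MemoLaAtRun w A0 A' A'.q0 i M M1 .success n1 →
      MemoLaAtRun w A0 A q i M (laAtRecord M1 q i .success) .success (n1 + 1)
  | atFailHigh {A0 A A' : SubNFA Sigma S} {q q' : S} {i j : ℕ}
      {M M1 : S × ℕ → Option LaAtVal} {n1 : ℕ} :
      M (q, i) = none → q ∉ A.F → A.T q = SubTrans.sub Kind.at A' q' →
      MemoLaAtRun w A0 A' A'.q0 i M M1 (.failure j) n1 →
      A0.nu q < j →
      MemoLaAtRun w A0 A q i M (laAtRecord M1 q i (.failure (A0.nu q)))
        (.failure (A0.nu q)) (n1 + 1)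
  | atFailLow {A0 A A' : SubNFA Sigma S} {q q' : S} {i j : ℕ}
      {M M1 : S × ℕ → Option LaAtVal} {n1 : ℕ} :
      M (q, i) = none → q ∉ A.F → A.T q = SubTrans.sub Kind.at A' q' →
      MemoLaAtRun w A0 A' A'.q0 i M M1 (.failure j) n1 →
      j ≤ A0.nu q →
      MemoLaAtRun w A0 A q i M (laAtRecord M1 q i (.failure j)) (.failure j) (n1 + 1)



/-! ## Auxiliary notions for the proof -/

/-- `Match` terminates with result `r`. -/
def Mt (w : List Sigma) (A : SubNFA Sigma S) (q : S) (i : ℕ) (r : Result) : Prop :=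
  ∃ s, LAMatchRun w A q i r s

theorem LAMatchRun.det {w : List Sigma} {A : SubNFA Sigma S} {q : S} {i : ℕ} {r : Result}
    {s : List (LaRunElem S)} (h : LAMatchRun w A q i r s) :
    ∀ {r' s'}, LAMatchRun w A q i r' s' → r = r' := by
  induction h with
  | accept hF =>
    intro r' s' h'
    cases h' <;> first | rfl | contradiction
  | eps hF hT _ ih =>
    intro r' s' h'
    cases h' <;> simp_all <;> grind
  | branchSucc hF hT _ ih =>
    intro r' s' h'
    cases h' <;> simp_all <;> grind
  | branchFail hF hT _ _ ih1 ih2 =>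
    intro r' s' h'
    cases h' <;> simp_all <;> grind
  | charSucc hF hT hw _ ih =>
    intro r' s' h'
    cases h' <;> simp_all <;> grind
  | charFail hF hT hw =>
    intro r' s' h'
    cases h' <;> simp_all
  | plaSucc hF hT _ _ ih1 ih2 =>
    intro r' s' h'
    cases h' <;> simp_all <;> grind
  | plaFail hF hT _ ih1 =>
    intro r' s' h'
    cases h' <;> simp_all <;> grind
  | atSucc hF hT _ _ ih1 ih2 =>
    intro r' s' h'
    cases h' <;> simp_all <;> grind
  | atFail hF hT _ ih1 =>
    intro r' s' h'
    cases h' <;> simp_all <;> grind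

theorem Mt.det {w : List Sigma} {A : SubNFA Sigma S} {q : S} {i : ℕ} {r r' : Result}
    (h : Mt w A q i r) (h' : Mt w A q i r') : r = r' := by
  obtain ⟨s, h⟩ := h
  obtain ⟨s', h'⟩ := h'
  exact h.det h'

/-- A stack of pending continuations of atomic groups. -/
abbrev Ctx (Sigma S : Type) := List (SubNFA Sigma S × S)

/-- Location of a component: root automaton, component, stack, is-top flag. -/
structure Loc (Sigma S : Type) where
  X : SubNFA Sigma S
  B : SubNFA Sigma S
  c : Ctx Sigma S
  t : Bool

/-- The components reachable from the whole automaton `A`. -/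
inductive Place (A : SubNFA Sigma S) :
    SubNFA Sigma S → SubNFA Sigma S → Ctx Sigma S → Bool → Prop where
  | root : Place A A A [] true
  | grp {X B B' : SubNFA Sigma S} {c : Ctx Sigma S} {t : Bool} {q q' : S} :
      Place A X B c t → q ∈ B.Q → B.T q = SubTrans.sub Kind.at B' q' →
      Place A X B' ((B, q') :: c) t
  | pla {X B B' : SubNFA Sigma S} {c : Ctx Sigma S} {t : Bool} {q q' : S} :
      Place A X B c t → q ∈ B.Q → B.T q = SubTrans.sub Kind.pla B' q' →
      Place A B' B' [] false

mutual
def SubNFA.locs : SubNFA Sigma S → SubNFA Sigma S → Ctx Sigma S → Bool → List (Loc Sigma S)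
  | .mk Q q0 F T, X, c, t => ⟨X, .mk Q q0 F T, c, t⟩ ::
      Q.flatMap (fun q => SubTrans.subLocs (T q) (.mk Q q0 F T) X c t)

def SubTrans.subLocs : SubTrans Sigma S → SubNFA Sigma S → SubNFA Sigma S → Ctx Sigma S →
    Bool → List (Loc Sigma S)
  | .sub k A' q', B, X, c, t =>
      if k = Kind.at then SubNFA.locs A' X ((B, q') :: c) t else SubNFA.locs A' A' [] false
  | .eps _, _, _, _, _ => []
  | .branch _ _, _, _, _, _ => []
  | .char _ _, _, _, _, _ => []
end

mutual
theorem SubNFA.locs_map : ∀ (A X : SubNFA Sigma S) (c : Ctx Sigma S) (t : Bool),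
    (A.locs X c t).map Loc.B = A.comps
  | .mk Q q0 F T, X, c, t => by
    simp only [SubNFA.locs, SubNFA.comps, SubNFA.compsD, List.map_cons, List.map_flatMap]
    congr 1
    congr 1
    funext q
    exact SubTrans.subLocs_map (T q) _ _ _ _

theorem SubTrans.subLocs_map : ∀ (tr : SubTrans Sigma S) (B X : SubNFA Sigma S)
    (c : Ctx Sigma S) (t : Bool),
    (tr.subLocs B X c t).map Loc.B = tr.subCompsD.map Prod.fst
  | .sub k A' q', B, X, c, t => by
    have h1 := SubNFA.locs_map A' X ((B, q') :: c) t
    have h2 := SubNFA.locs_map A' A' [] false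
    simp only [SubTrans.subLocs, SubTrans.subCompsD]
    split
    · rw [h1]; simp [SubNFA.comps, Function.comp_def]
    · rw [h2]; simp [SubNFA.comps, Function.comp_def]
  | .eps _, _, _, _, _ => by simp [SubTrans.subLocs, SubTrans.subCompsD]
  | .branch _ _, _, _, _, _ => by simp [SubTrans.subLocs, SubTrans.subCompsD]
  | .char _ _, _, _, _, _ => by simp [SubTrans.subLocs, SubTrans.subCompsD]
end

theorem SubNFA.locs_self (A X : SubNFA Sigma S) (c : Ctx Sigma S) (t : Bool) :
    ⟨X, A, c, t⟩ ∈ A.locs X c t := by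
  cases A
  simp [SubNFA.locs]

mutual
theorem SubNFA.locs_closed : ∀ (A X : SubNFA Sigma S) (c : Ctx Sigma S) (t : Bool)
    (l : Loc Sigma S), l ∈ A.locs X c t → ∀ q ∈ l.B.Q, ∀ m,
    m ∈ (l.B.T q).subLocs l.B l.X l.c l.t → m ∈ A.locs X c t
  | .mk Q q0 F T, X, c, t => by
    intro l hl q hq m hm
    simp only [SubNFA.locs, List.mem_cons, List.mem_flatMap] at hl ⊢
    rcases hl with rfl | ⟨p, hp, hl⟩
    · exact Or.inr ⟨q, hq, hm⟩
    · exact Or.inr ⟨p, hp, SubTrans.subLocs_closed (T p) _ _ _ _ l hl q hq m hm⟩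

theorem SubTrans.subLocs_closed : ∀ (tr : SubTrans Sigma S) (B X : SubNFA Sigma S)
    (c : Ctx Sigma S) (t : Bool)
    (l : Loc Sigma S), l ∈ tr.subLocs B X c t → ∀ q ∈ l.B.Q, ∀ m,
    m ∈ (l.B.T q).subLocs l.B l.X l.c l.t → m ∈ tr.subLocs B X c t
  | .sub k A' q', B, X, c, t => by
    have h1 := SubNFA.locs_closed A' X ((B, q') :: c) t
    have h2 := SubNFA.locs_closed A' A' [] false
    simp only [SubTrans.subLocs]
    split
    · exact h1
    · exact h2
  | .eps _, _, _, _, _ => by simp [SubTrans.subLocs]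
  | .branch _ _, _, _, _, _ => by simp [SubTrans.subLocs]
  | .char _ _, _, _, _, _ => by simp [SubTrans.subLocs]
end

theorem Place.mem_locs {A X B : SubNFA Sigma S} {c : Ctx Sigma S} {t : Bool}
    (h : Place A X B c t) : ⟨X, B, c, t⟩ ∈ A.locs A [] true := by
  induction h with
  | root => exact SubNFA.locs_self _ _ _ _
  | grp _ hq hT ih =>
    refine SubNFA.locs_closed _ _ _ _ _ ih _ hq _ ?_
    simp only [hT, SubTrans.subLocs]
    exact SubNFA.locs_self _ _ _ _
  | pla _ hq hT ih =>
    refine SubNFA.locs_closed _ _ _ _ _ ih _ hq _ ?_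
    simp only [hT, SubTrans.subLocs]
    exact SubNFA.locs_self _ _ _ _

theorem Place.mem_comps {A X B : SubNFA Sigma S} {c : Ctx Sigma S} {t : Bool}
    (h : Place A X B c t) : B ∈ A.comps := by
  rw [← SubNFA.locs_map A A [] true]
  exact List.mem_map_of_mem (f := Loc.B) h.mem_locs

theorem eq_of_nodup_flatMap {β γ : Type} (f : β → List γ) (l : List β)
    (h : (l.flatMap f).Nodup) {a b : β} (ha : a ∈ l) (hb : b ∈ l) {x : γ}
    (hxa : x ∈ f a) (hxb : x ∈ f b) : a = b := by
  induction l with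
  | nil => simp at ha
  | cons y l ih =>
    simp only [List.flatMap_cons, List.nodup_append] at h
    obtain ⟨h1, h2, h3⟩ := h
    rcases List.mem_cons.1 ha with rfl | ha'
    · rcases List.mem_cons.1 hb with rfl | hb
      · rfl
      · exact absurd rfl (h3 x hxa x (List.mem_flatMap.2 ⟨b, hb, hxb⟩))
    · rcases List.mem_cons.1 hb with hb | hb
      · subst hb
        exact absurd rfl (h3 x hxb x (List.mem_flatMap.2 ⟨a, ha', hxa⟩))
      · exact ih h2 ha' hb

theorem Place.unique {A X B X' B' : SubNFA Sigma S} {c c' : Ctx Sigma S} {t t' : Bool}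
    (hA : A.allStates.Nodup)
    (h : Place A X B c t) (h' : Place A X' B' c' t') {q : S} (hq : q ∈ B.Q) (hq' : q ∈ B'.Q) :
    X = X' ∧ B = B' ∧ c = c' ∧ t = t' := by
  have hn : ((A.locs A [] true).flatMap (fun l => l.B.Q)).Nodup := by
    have : (A.locs A [] true).flatMap (fun l => l.B.Q) = A.allStates := by
      rw [SubNFA.allStates, ← SubNFA.locs_map A A [] true, List.flatMap_map]
    rw [this]; exact hA
  have := eq_of_nodup_flatMap _ _ hn h.mem_locs h'.mem_locs (x := q) hq hq'
  simpa using this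

theorem SubNFA.compsD_self (A : SubNFA Sigma S) : (A, 0) ∈ A.compsD := by
  cases A
  simp [SubNFA.compsD]

mutual
theorem SubNFA.compsD_closed : ∀ (A : SubNFA Sigma S) (B : SubNFA Sigma S) (d : ℕ),
    (B, d) ∈ A.compsD → ∀ q ∈ B.Q, ∀ k B' q', B.T q = SubTrans.sub k B' q' →
    (B', d + if k = Kind.at then 1 else 0) ∈ A.compsD
  | .mk Q q0 F T => by
    intro B d hl q hq k B' q' hT
    simp only [SubNFA.compsD, List.mem_cons, List.mem_flatMap] at hl ⊢
    rcases hl with hl | ⟨p, hp, hl⟩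
    · obtain ⟨rfl, rfl⟩ := Prod.mk.inj hl
      refine Or.inr ⟨q, hq, ?_⟩
      simp only [SubNFA.T] at hT
      rw [hT]
      simp only [SubTrans.subCompsD, List.mem_map]
      exact ⟨_, SubNFA.compsD_self B', by simp⟩
    · exact Or.inr ⟨p, hp, SubTrans.subCompsD_closed (T p) B d hl q hq k B' q' hT⟩

theorem SubTrans.subCompsD_closed : ∀ (tr : SubTrans Sigma S) (B : SubNFA Sigma S) (d : ℕ),
    (B, d) ∈ tr.subCompsD → ∀ q ∈ B.Q, ∀ k B' q', B.T q = SubTrans.sub k B' q' →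
    (B', d + if k = Kind.at then 1 else 0) ∈ tr.subCompsD
  | .sub k0 A' q0' => by
    intro B d hl q hq k B' q' hT
    simp only [SubTrans.subCompsD, List.mem_map] at hl ⊢
    obtain ⟨⟨B1, d1⟩, hm, he⟩ := hl
    obtain ⟨rfl, rfl⟩ := Prod.mk.inj he
    refine ⟨_, SubNFA.compsD_closed A' _ _ hm q hq k B' q' hT, ?_⟩
    simp only [Prod.mk.injEq, true_and]
    omega
  | .eps _ => by simp [SubTrans.subCompsD]
  | .branch _ _ => by simp [SubTrans.subCompsD]
  | .char _ _ => by simp [SubTrans.subCompsD]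
end

theorem sublist_flatMap_of_mem {β γ : Type} (f : β → List γ) (l : List β) {a : β}
    (ha : a ∈ l) : (f a).Sublist (l.flatMap f) := by
  induction l with
  | nil => simp at ha
  | cons y l ih =>
    simp only [List.flatMap_cons]
    rcases List.mem_cons.1 ha with rfl | ha
    · exact List.sublist_append_left _ _
    · exact (ih ha).trans (List.sublist_append_right _ _)

mutual
theorem SubNFA.comps_sublist : ∀ (A : SubNFA Sigma S) (B : SubNFA Sigma S),
    B ∈ A.comps → B.comps.Sublist A.comps
  | .mk Q q0 F T => by
    intro B hB
    have hB' := hB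
    simp only [SubNFA.comps, SubNFA.compsD, List.map_cons, List.map_flatMap, List.mem_cons,
      List.mem_flatMap] at hB
    rcases hB with rfl | ⟨p, hp, hl⟩
    · exact List.Sublist.refl _
    · have h1 := SubTrans.subComps_sublist (T p) B hl
      refine h1.trans ?_
      simp only [SubNFA.comps, SubNFA.compsD, List.map_cons, List.map_flatMap]
      exact List.Sublist.cons _ (sublist_flatMap_of_mem
        (fun q => (T q).subCompsD.map Prod.fst) Q hp)

theorem SubTrans.subComps_sublist : ∀ (tr : SubTrans Sigma S) (B : SubNFA Sigma S),
    B ∈ tr.subCompsD.map Prod.fst → B.comps.Sublist (tr.subCompsD.map Prod.fst)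
  | .sub k0 A' q0' => by
    intro B hl
    have h := SubNFA.comps_sublist A' B
    have e : (SubTrans.sub k0 A' q0').subCompsD.map Prod.fst = A'.comps := by
      simp [SubTrans.subCompsD, SubNFA.comps, Function.comp_def]
    rw [e] at hl ⊢
    exact h hl
  | .eps _ => by simp [SubTrans.subCompsD]
  | .branch _ _ => by simp [SubTrans.subCompsD]
  | .char _ _ => by simp [SubTrans.subCompsD]
end

theorem Place.depth {A X B : SubNFA Sigma S} {c : Ctx Sigma S} {t : Bool}
    (hA : A.allStates.Nodup) (h : Place A X B c t) :
    X.allStates.Nodup ∧ (B, c.length) ∈ X.compsD := by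
  induction h with
  | root => exact ⟨hA, SubNFA.compsD_self _⟩
  | grp _ hq hT ih =>
    exact ⟨ih.1, by simpa using SubNFA.compsD_closed _ _ _ ih.2 _ hq _ _ _ hT⟩
  | @pla X B B' c t q q' hP hq hT ih =>
    refine ⟨?_, SubNFA.compsD_self _⟩
    have h2 : B' ∈ X.comps := List.mem_map_of_mem (f := Prod.fst)
      (SubNFA.compsD_closed _ _ _ ih.2 _ hq _ _ _ hT)
    exact ih.1.sublist ((SubNFA.comps_sublist _ _ h2).flatMap _)

theorem sum_depth [DecidableEq S] (l : List (SubNFA Sigma S × ℕ))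
    (h : (l.flatMap (fun p => p.1.Q)).Nodup) {B : SubNFA Sigma S} {d : ℕ} (hB : (B, d) ∈ l)
    {q : S} (hq : q ∈ B.Q) : (l.map (fun p => if q ∈ p.1.Q then p.2 else 0)).sum = d := by
  induction l with
  | nil => simp at hB
  | cons y l ih =>
    simp only [List.flatMap_cons, List.nodup_append] at h
    obtain ⟨h1, h2, h3⟩ := h
    simp only [List.map_cons, List.sum_cons]
    rcases List.mem_cons.1 hB with rfl | hB
    · have : (l.map (fun p => if q ∈ p.1.Q then p.2 else 0)).sum = 0 := by
        rw [List.sum_eq_zero]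
        intro x hx
        obtain ⟨p, hp, rfl⟩ := List.mem_map.1 hx
        have : q ∉ p.1.Q := fun hc => h3 q hq q (List.mem_flatMap.2 ⟨p, hp, hc⟩) rfl
        simp [this]
      simp [this, hq]
    · have : q ∉ y.1.Q := fun hc => h3 q hc q (List.mem_flatMap.2 ⟨_, hB, hq⟩) rfl
      simp [this, ih h2 hB]

theorem Place.nu [DecidableEq S] {A X B : SubNFA Sigma S} {c : Ctx Sigma S} {t : Bool}
    (hA : A.allStates.Nodup) (h : Place A X B c t) {q : S} (hq : q ∈ B.Q) :
    X.nu q = c.length := by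
  obtain ⟨h1, h2⟩ := h.depth hA
  refine sum_depth _ ?_ h2 hq
  rw [SubNFA.allStates, SubNFA.comps, List.flatMap_map] at h1
  exact h1

/-! ## Meaning of memoized values -/

/-- Matching from `(q, i)` in `B` and then through the stack `c` fails at depth `j`. -/
def FailAt (w : List Sigma) : Ctx Sigma S → SubNFA Sigma S → S → ℕ → ℕ → Prop
  | [], B, q, i, j => j = 0 ∧ Mt w B q i .failure
  | (B', q') :: c, B, q, i, j => (j = c.length + 1 ∧ Mt w B q i .failure) ∨
      ∃ i', Mt w B q i (.successAt i') ∧ FailAt w c B' q' i' j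

/-- Matching from `(q, i)` in `B` and then through the stack `c` succeeds. -/
def SuccTop (w : List Sigma) : Ctx Sigma S → SubNFA Sigma S → S → ℕ → Prop
  | [], B, q, i => ∃ i', Mt w B q i (.successAt i')
  | (B', q') :: c, B, q, i => ∃ i', Mt w B q i (.successAt i') ∧ SuccTop w c B' q' i'

theorem FailAt.le {w : List Sigma} {c : Ctx Sigma S} {B : SubNFA Sigma S} {q : S} {i j : ℕ}
    (h : FailAt w c B q i j) : j ≤ c.length := by
  induction c generalizing B q i with
  | nil => exact h.1.le
  | cons p c ih =>
    rcases h with h | ⟨i', _, h⟩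
    · exact h.1.le
    · exact (ih h).trans (by simp)

theorem FailAt.fail {w : List Sigma} {c : Ctx Sigma S} {B : SubNFA Sigma S} {q : S} {i : ℕ}
    (h : FailAt w c B q i c.length) : Mt w B q i .failure := by
  cases c with
  | nil => exact h.2
  | cons p c =>
    rcases h with h | ⟨i', _, h⟩
    · exact h.2
    · have := h.le
      simp at this

theorem FailAt.intro {w : List Sigma} {c : Ctx Sigma S} {B : SubNFA Sigma S} {q : S} {i : ℕ}
    (h : Mt w B q i .failure) : FailAt w c B q i c.length := by
  cases c with
  | nil => exact ⟨rfl, h⟩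
  | cons p c => exact Or.inl ⟨rfl, h⟩

theorem FailAt.transfer {w : List Sigma} {c : Ctx Sigma S} {B : SubNFA Sigma S} {q q' : S}
    {i i' j : ℕ} (h : FailAt w c B q' i' j)
    (hs : ∀ m, Mt w B q' i' (.successAt m) → Mt w B q i (.successAt m))
    (hf : j = c.length → Mt w B q' i' .failure → Mt w B q i .failure) :
    FailAt w c B q i j := by
  cases c with
  | nil => exact ⟨h.1, hf h.1 h.2⟩
  | cons p c =>
    rcases h with h | ⟨m, h1, h⟩
    · exact Or.inl ⟨h.1, hf h.1 h.2⟩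
    · exact Or.inr ⟨m, hs m h1, h⟩

theorem SuccTop.transfer {w : List Sigma} {c : Ctx Sigma S} {B : SubNFA Sigma S} {q q' : S}
    {i i' : ℕ} (h : SuccTop w c B q' i')
    (hs : ∀ m, Mt w B q' i' (.successAt m) → Mt w B q i (.successAt m)) :
    SuccTop w c B q i := by
  cases c with
  | nil => exact h.imp hs
  | cons p c => exact h.imp fun m h => ⟨hs m h.1, h.2⟩

/-- Matching from `(p, k)` in `Bp` through the stack reaches success of `B` at `m`, where
`c` is the stack of `B`. -/
inductive Reach (w : List Sigma) (c : Ctx Sigma S) (B : SubNFA Sigma S) (m : ℕ) :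
    Ctx Sigma S → SubNFA Sigma S → S → ℕ → Prop where
  | here {p : S} {k : ℕ} : Mt w B p k (.successAt m) → Reach w c B m c B p k
  | up {cp : Ctx Sigma S} {Bp B' : SubNFA Sigma S} {p q' : S} {k k' : ℕ} :
      Mt w Bp p k (.successAt k') → Reach w c B m cp B' q' k' →
      Reach w c B m ((B', q') :: cp) Bp p k

theorem Reach.failAt {w : List Sigma} {c cp : Ctx Sigma S} {B Bp B' : SubNFA Sigma S}
    {m k j : ℕ} {p q' : S} (h : Reach w ((B', q') :: c) B m cp Bp p k)
    (hf : FailAt w c B' q' m j) : FailAt w cp Bp p k j := by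
  induction h with
  | here h => exact Or.inr ⟨_, h, hf⟩
  | up h _ ih => exact Or.inr ⟨_, h, ih⟩

theorem Reach.succTop {w : List Sigma} {c cp : Ctx Sigma S} {B Bp B' : SubNFA Sigma S}
    {m k : ℕ} {p q' : S} (h : Reach w ((B', q') :: c) B m cp Bp p k)
    (hf : SuccTop w c B' q' m) : SuccTop w cp Bp p k := by
  induction h with
  | here h => exact ⟨_, h, hf⟩
  | up h _ ih => exact ⟨_, h, ih⟩

theorem Reach.succTop_nil {w : List Sigma} {cp : Ctx Sigma S} {B Bp : SubNFA Sigma S}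
    {m k : ℕ} {p : S} (h : Reach w [] B m cp Bp p k) : SuccTop w cp Bp p k := by
  induction h with
  | here h => exact ⟨_, h⟩
  | up h _ ih => exact ⟨_, h, ih⟩

theorem Reach.lift {w : List Sigma} {c cp : Ctx Sigma S} {B Bp B' : SubNFA Sigma S}
    {m m' k : ℕ} {p q' : S} (h : Reach w ((B', q') :: c) B m cp Bp p k)
    (hs : Mt w B' q' m (.successAt m')) : Reach w c B' m' cp Bp p k := by
  induction h with
  | here h => exact .up h (.here hs)
  | up h _ ih => exact .up h ih

/-- Meaning of a table entry. -/
def ValOK (w : List Sigma) (c : Ctx Sigma S) (t : Bool) (B : SubNFA Sigma S) (q : S) (i : ℕ) :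
    LaAtVal → Prop
  | .success => t = false ∧ SuccTop w c B q i
  | .failure j => FailAt w c B q i j

/-- Meaning of a delayed key. -/
def KeyOK (w : List Sigma) (A X : SubNFA Sigma S) (c : Ctx Sigma S) (t : Bool)
    (B : SubNFA Sigma S) (m : ℕ) (pk : S × ℕ) : Prop :=
  ∃ Bp cp, Place A X Bp cp t ∧ pk.1 ∈ Bp.Q ∧ Reach w c B m cp Bp pk.1 pk.2

/-- Meaning of a result. -/
def ResOK (w : List Sigma) (A X : SubNFA Sigma S) (c : Ctx Sigma S) (t : Bool)
    (B : SubNFA Sigma S) (q : S) (i : ℕ) : LaAtResult S → Prop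
  | .success => t = false ∧ SuccTop w c B q i
  | .failure j => FailAt w c B q i j
  | .successAt m K => Mt w B q i (.successAt m) ∧ ∀ pk ∈ K, KeyOK w A X c t B m pk

/-- All table entries are meaningful. -/
def Sound (w : List Sigma) (A : SubNFA Sigma S) (M : S × ℕ → Option LaAtVal) : Prop :=
  ∀ X B c t q i v, Place A X B c t → q ∈ B.Q → M (q, i) = some v → ValOK w c t B q i v

theorem Sound.update {w : List Sigma} {A : SubNFA Sigma S}
    {M M' : S × ℕ → Option LaAtVal}
    (hA : A.allStates.Nodup) (hM : Sound w A M)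
    (h : ∀ p k v, M' (p, k) = some v → M (p, k) = some v ∨
      ∃ X B c t, Place A X B c t ∧ p ∈ B.Q ∧ ValOK w c t B p k v) : Sound w A M' := by
  intro X' B' c' t' q i v hP hq hv
  rcases h _ _ _ hv with h | ⟨X, B, c, t, hP', hq', h⟩
  · exact hM _ _ _ _ _ _ _ hP hq h
  · obtain ⟨rfl, rfl, rfl, rfl⟩ := hP.unique hA hP' hq hq'
    exact h

theorem Sound.record [DecidableEq S] {w : List Sigma} {A X B : SubNFA Sigma S}
    {c : Ctx Sigma S} {t : Bool} {M : S × ℕ → Option LaAtVal} {q : S} {i : ℕ}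
    {r : LaAtResult S}
    (hA : A.allStates.Nodup) (hM : Sound w A M) (hP : Place A X B c t) (hq : q ∈ B.Q)
    (hr : ResOK w A X c t B q i r) : Sound w A (laAtRecord M q i r) := by
  refine Sound.update hA hM ?_
  intro p k v hv
  cases r with
  | successAt m K => exact Or.inl hv
  | success =>
    simp only [laAtRecord] at hv
    split at hv
    · rename_i he
      obtain ⟨rfl, rfl⟩ := Prod.mk.inj he
      obtain rfl := Option.some.inj hv
      exact Or.inr ⟨X, B, c, t, hP, hq, hr⟩
    · exact Or.inl hv
  | failure j =>
    simp only [laAtRecord] at hv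
    split at hv
    · rename_i he
      obtain ⟨rfl, rfl⟩ := Prod.mk.inj he
      obtain rfl := Option.some.inj hv
      exact Or.inr ⟨X, B, c, t, hP, hq, hr⟩
    · exact Or.inl hv

theorem Sound.batch [DecidableEq S] {w : List Sigma} {A X : SubNFA Sigma S}
    {t : Bool} {M : S × ℕ → Option LaAtVal} {K : Finset (S × ℕ)} {v : LaAtVal}
    (hA : A.allStates.Nodup) (hM : Sound w A M)
    (hK : ∀ pk ∈ K, ∃ Bp cp, Place A X Bp cp t ∧ pk.1 ∈ Bp.Q ∧ ValOK w cp t Bp pk.1 pk.2 v) :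
    Sound w A (laAtBatch M K v) := by
  refine Sound.update hA hM ?_
  intro p k v' hv
  simp only [laAtBatch] at hv
  split at hv
  · rename_i he
    obtain rfl := Option.some.inj hv
    obtain ⟨Bp, cp, h1, h2, h3⟩ := hK _ he
    exact Or.inr ⟨X, Bp, cp, t, h1, h2, h3⟩
  · exact Or.inl hv

theorem ResOK.transfer [DecidableEq S] {w : List Sigma} {A X B : SubNFA Sigma S}
    {c : Ctx Sigma S} {t : Bool} {q q' : S} {i i' : ℕ} {r : LaAtResult S}
    (h : ResOK w A X c t B q' i' r) (hP : Place A X B c t) (hq : q ∈ B.Q)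
    (hs : ∀ m, Mt w B q' i' (.successAt m) → Mt w B q i (.successAt m))
    (hf : r = .failure c.length → Mt w B q' i' .failure → Mt w B q i .failure) :
    ResOK w A X c t B q i (laAtFinal q i r) := by
  cases r with
  | success => exact ⟨h.1, h.2.transfer hs⟩
  | failure j => exact FailAt.transfer h hs (fun hj => hf (by rw [hj]))
  | successAt m K =>
    refine ⟨hs _ h.1, ?_⟩
    intro pk hpk
    rcases Finset.mem_insert.1 hpk with rfl | hpk
    · exact ⟨B, c, hP, hq, .here (hs _ h.1)⟩
    · exact h.2 _ hpk

theorem memo_sound [DecidableEq S] {w : List Sigma} {A : SubNFA Sigma S} (hWF : A.WF)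
    {X B : SubNFA Sigma S} {q : S} {i : ℕ} {M M' : S × ℕ → Option LaAtVal}
    {r : LaAtResult S} {n : ℕ} (h : MemoLaAtRun w X B q i M M' r n) :
    ∀ {c t}, Place A X B c t → q ∈ B.Q → Sound w A M →
      Sound w A M' ∧ ResOK w A X c t B q i r := by
  have hA := hWF.2
  induction h with
  | @memoHit A0 A q i M v hv =>
    intro c t hP hq hM
    refine ⟨hM, ?_⟩
    have := hM _ _ _ _ _ _ _ hP hq hv
    cases v <;> exact this
  | @accept A0 B q i M hM0 hF =>
    intro c t hP hq hM
    have hm : Mt w B q i (.successAt i) := ⟨_, .accept hF⟩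
    refine ⟨hM, hm, ?_⟩
    intro pk hpk
    obtain rfl := Finset.mem_singleton.1 hpk
    exact ⟨_, _, hP, hq, .here hm⟩
  | eps hM0 hF hT _ ih =>
    intro c t hP hq hM
    have hL := (hWF.1 _ hP.mem_comps).2.2 _ hq hF
    rw [hT] at hL
    obtain ⟨h1, h2⟩ := ih hP hL hM
    have h3 := h2.transfer hP hq (fun m ⟨s, h⟩ => ⟨_, .eps hF hT h⟩)
      (fun _ ⟨s, h⟩ => ⟨_, .eps hF hT h⟩)
    exact ⟨h1.record hA hP hq h3, h3⟩
  | branchNoBT hM0 hF hT _ hne ih =>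
    intro c t hP hq hM
    have hL := (hWF.1 _ hP.mem_comps).2.2 _ hq hF
    rw [hT] at hL
    obtain ⟨h1, h2⟩ := ih hP hL.1 hM
    have h3 := h2.transfer hP hq (fun m ⟨s, h⟩ => ⟨_, .branchSucc hF hT h⟩)
      (fun he => absurd (hP.nu hA hq).symm (hne _ he))
    exact ⟨h1.record hA hP hq h3, h3⟩
  | branchBTFail hM0 hF hT _ _ ih1 ih2 =>
    intro c t hP hq hM
    have hL := (hWF.1 _ hP.mem_comps).2.2 _ hq hF
    rw [hT] at hL
    obtain ⟨h1, h2⟩ := ih1 hP hL.1 hM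
    obtain ⟨h3, h4⟩ := ih2 hP hL.2 h1
    rw [hP.nu hA hq] at h2 ⊢
    obtain ⟨s, h2⟩ := FailAt.fail h2
    rw [min_eq_right (FailAt.le h4)]
    have h5 := h4.transfer hP hq (fun m ⟨s, h⟩ => ⟨_, .branchFail hF hT h2 h⟩)
      (fun _ ⟨s, h⟩ => ⟨_, .branchFail hF hT h2 h⟩)
    exact ⟨h3.record hA hP hq h5, h5⟩
  | branchBTOther hM0 hF hT _ _ _ ih1 ih2 =>
    intro c t hP hq hM
    have hL := (hWF.1 _ hP.mem_comps).2.2 _ hq hF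
    rw [hT] at hL
    obtain ⟨h1, h2⟩ := ih1 hP hL.1 hM
    obtain ⟨h3, h4⟩ := ih2 hP hL.2 h1
    rw [hP.nu hA hq] at h2
    obtain ⟨s, h2⟩ := FailAt.fail h2
    have h5 := h4.transfer hP hq (fun m ⟨s, h⟩ => ⟨_, .branchFail hF hT h2 h⟩)
      (fun _ ⟨s, h⟩ => ⟨_, .branchFail hF hT h2 h⟩)
    exact ⟨h3.record hA hP hq h5, h5⟩
  | charSucc hM0 hF hT hw _ ih =>
    intro c t hP hq hM
    have hL := (hWF.1 _ hP.mem_comps).2.2 _ hq hF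
    rw [hT] at hL
    obtain ⟨h1, h2⟩ := ih hP hL hM
    have h3 := h2.transfer hP hq (fun m ⟨s, h⟩ => ⟨_, .charSucc hF hT hw h⟩)
      (fun _ ⟨s, h⟩ => ⟨_, .charSucc hF hT hw h⟩)
    exact ⟨h1.record hA hP hq h3, h3⟩
  | @charFail A0 B q q' σ i M hM0 hF hT hw =>
    intro c t hP hq hM
    rw [hP.nu hA hq]
    have h3 : ResOK w A A0 c t B q i (.failure c.length) :=
      FailAt.intro ⟨_, .charFail hF hT hw⟩
    exact ⟨hM.record hA hP hq h3, h3⟩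
  | plaSuccAt hM0 hF hT _ _ ih1 ih2 =>
    intro c t hP hq hM
    have hL := (hWF.1 _ hP.mem_comps).2.2 _ hq hF
    rw [hT] at hL
    have hP' := hP.pla hq hT
    obtain ⟨h1, ⟨s, h2⟩, hK⟩ := ih1 hP' (hWF.1 _ hP'.mem_comps).1 hM
    obtain ⟨h3, h4⟩ := ih2 hP hL (h1.batch hA (fun pk hpk => by
      obtain ⟨Bp, cp, g1, g2, g3⟩ := hK pk hpk
      exact ⟨Bp, cp, g1, g2, rfl, g3.succTop_nil⟩))
    have h5 := h4.transfer hP hq (fun m ⟨s, h⟩ => ⟨_, .plaSucc hF hT h2 h⟩)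
      (fun _ ⟨s, h⟩ => ⟨_, .plaSucc hF hT h2 h⟩)
    exact ⟨h3.record hA hP hq h5, h5⟩
  | plaBare hM0 hF hT _ _ ih1 ih2 =>
    intro c t hP hq hM
    have hL := (hWF.1 _ hP.mem_comps).2.2 _ hq hF
    rw [hT] at hL
    have hP' := hP.pla hq hT
    obtain ⟨h1, _, _, s, h2⟩ := ih1 hP' (hWF.1 _ hP'.mem_comps).1 hM
    obtain ⟨h3, h4⟩ := ih2 hP hL h1
    have h5 := h4.transfer hP hq (fun m ⟨s, h⟩ => ⟨_, .plaSucc hF hT h2 h⟩)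
      (fun _ ⟨s, h⟩ => ⟨_, .plaSucc hF hT h2 h⟩)
    exact ⟨h3.record hA hP hq h5, h5⟩
  | @plaFail A0 B B' q q' i j M M1 n1 hM0 hF hT _ ih1 =>
    intro c t hP hq hM
    have hP' := hP.pla hq hT
    obtain ⟨h1, _, s, h2⟩ := ih1 hP' (hWF.1 _ hP'.mem_comps).1 hM
    rw [hP.nu hA hq]
    have h3 : ResOK w A A0 c t B q i (.failure c.length) :=
      FailAt.intro ⟨_, .plaFail hF hT h2⟩
    exact ⟨h1.record hA hP hq h3, h3⟩
  | @atSuccSucc A0 B B' q q' i i' i'' K' K'' M M1 M2 n1 n2 hM0 hF hT _ _ ih1 ih2 =>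
    intro c t hP hq hM
    have hL := (hWF.1 _ hP.mem_comps).2.2 _ hq hF
    rw [hT] at hL
    have hP' := hP.grp hq hT
    obtain ⟨h1, ⟨s, h2⟩, hK⟩ := ih1 hP' (hWF.1 _ hP'.mem_comps).1 hM
    obtain ⟨h3, h4, hK2⟩ := ih2 hP hL h1
    refine ⟨h3, ResOK.transfer (q' := q') (i' := i') (r := .successAt i'' (K' ∪ K'')) ⟨h4, ?_⟩
      hP hq (fun m ⟨s, h⟩ => ⟨_, .atSucc hF hT h2 h⟩)
      (fun _ ⟨s, h⟩ => ⟨_, .atSucc hF hT h2 h⟩)⟩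
    intro pk hpk
    rcases Finset.mem_union.1 hpk with hpk | hpk
    · obtain ⟨Bp, cp, g1, g2, g3⟩ := hK pk hpk
      exact ⟨Bp, cp, g1, g2, g3.lift h4⟩
    · exact hK2 pk hpk
  | atSuccBare hM0 hF hT _ _ ih1 ih2 =>
    intro c t hP hq hM
    have hL := (hWF.1 _ hP.mem_comps).2.2 _ hq hF
    rw [hT] at hL
    have hP' := hP.grp hq hT
    obtain ⟨h1, ⟨s, h2⟩, hK⟩ := ih1 hP' (hWF.1 _ hP'.mem_comps).1 hM
    obtain ⟨h3, h4⟩ := ih2 hP hL h1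
    have h5 := h4.transfer hP hq (fun m ⟨s, h⟩ => ⟨_, .atSucc hF hT h2 h⟩)
      (fun _ ⟨s, h⟩ => ⟨_, .atSucc hF hT h2 h⟩)
    exact ⟨(h3.batch hA (fun pk hpk => by
      obtain ⟨Bp, cp, g1, g2, g3⟩ := hK pk hpk
      exact ⟨Bp, cp, g1, g2, h4.1, g3.succTop h4.2⟩)).record hA hP hq h5, h5⟩
  | atSuccFail hM0 hF hT _ _ ih1 ih2 =>
    intro c t hP hq hM
    have hL := (hWF.1 _ hP.mem_comps).2.2 _ hq hF
    rw [hT] at hL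
    have hP' := hP.grp hq hT
    obtain ⟨h1, ⟨s, h2⟩, hK⟩ := ih1 hP' (hWF.1 _ hP'.mem_comps).1 hM
    obtain ⟨h3, h4⟩ := ih2 hP hL h1
    have h5 := h4.transfer hP hq (fun m ⟨s, h⟩ => ⟨_, .atSucc hF hT h2 h⟩)
      (fun _ ⟨s, h⟩ => ⟨_, .atSucc hF hT h2 h⟩)
    exact ⟨(h3.batch hA (fun pk hpk => by
      obtain ⟨Bp, cp, g1, g2, g3⟩ := hK pk hpk
      exact ⟨Bp, cp, g1, g2, g3.failAt h4⟩)).record hA hP hq h5, h5⟩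
  | @atBare A0 B B' q q' i M M1 n1 hM0 hF hT _ ih1 =>
    intro c t hP hq hM
    have hP' := hP.grp hq hT
    obtain ⟨h1, ht, i', ⟨s, h2⟩, h4⟩ := ih1 hP' (hWF.1 _ hP'.mem_comps).1 hM
    have h5 : ResOK w A A0 c t B q i .success :=
      ⟨ht, h4.transfer (fun m ⟨s, h⟩ => ⟨_, .atSucc hF hT h2 h⟩)⟩
    exact ⟨h1.record hA hP hq h5, h5⟩
  | @atFailHigh A0 B B' q q' i j M M1 n1 hM0 hF hT _ hj ih1 =>
    intro c t hP hq hM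
    have hP' := hP.grp hq hT
    obtain ⟨h1, h2⟩ := ih1 hP' (hWF.1 _ hP'.mem_comps).1 hM
    rw [hP.nu hA hq] at hj ⊢
    have hj' : j = ((B, q') :: c).length := le_antisymm (FailAt.le h2) hj
    rw [hj'] at h2
    obtain ⟨s, h2⟩ := FailAt.fail h2
    have h3 : ResOK w A A0 c t B q i (.failure c.length) :=
      FailAt.intro ⟨_, .atFail hF hT h2⟩
    exact ⟨h1.record hA hP hq h3, h3⟩
  | @atFailLow A0 B B' q q' i j M M1 n1 hM0 hF hT _ hj ih1 =>
    intro c t hP hq hM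
    have hP' := hP.grp hq hT
    obtain ⟨h1, h2⟩ := ih1 hP' (hWF.1 _ hP'.mem_comps).1 hM
    rw [hP.nu hA hq] at hj
    rcases h2 with h2 | ⟨i', ⟨s, h2⟩, h4⟩
    · omega
    · have h5 : ResOK w A A0 c t B q i (.failure j) :=
        FailAt.transfer h4 (fun m ⟨s, h⟩ => ⟨_, .atSucc hF hT h2 h⟩)
          (fun _ ⟨s, h⟩ => ⟨_, .atSucc hF hT h2 h⟩)
      exact ⟨h1.record hA hP hq h5, h5⟩

theorem memo_exists [DecidableEq S] {w : List Sigma} {A : SubNFA Sigma S} (hWF : A.WF)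
    {B : SubNFA Sigma S} {q : S} {i : ℕ} {r : Result} {s : List (LaRunElem S)}
    (h : LAMatchRun w B q i r s) :
    ∀ {X c t M}, Place A X B c t → q ∈ B.Q → Sound w A M →
      ∃ M' ra n, MemoLaAtRun w X B q i M M' ra n := by
  have hA := hWF.2
  induction h with
  | @accept B q i hF =>
    intro X c t M hP hq hM
    cases hm : M (q, i) with
    | some v => exact ⟨_, _, _, .memoHit hm⟩
    | none => exact ⟨_, _, _, .accept hm hF⟩
  | @eps B q q' i r s hF hT _ ih =>
    intro X c t M hP hq hM
    cases hm : M (q, i) with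
    | some v => exact ⟨_, _, _, .memoHit hm⟩
    | none =>
      have hL := (hWF.1 _ hP.mem_comps).2.2 _ hq hF
      rw [hT] at hL
      obtain ⟨M1, r1, n1, h1⟩ := ih hP hL hM
      exact ⟨_, _, _, .eps hm hF hT h1⟩
  | @branchSucc B q q' q'' i i' s hF hT hr ih =>
    intro X c t M hP hq hM
    cases hm : M (q, i) with
    | some v => exact ⟨_, _, _, .memoHit hm⟩
    | none =>
      have hL := (hWF.1 _ hP.mem_comps).2.2 _ hq hF
      rw [hT] at hL
      obtain ⟨M1, r1, n1, h1⟩ := ih hP hL.1 hM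
      refine ⟨_, _, _, .branchNoBT hm hF hT h1 ?_⟩
      rintro j rfl rfl
      have h2 := (memo_sound hWF h1 hP hL.1 hM).2
      rw [hP.nu hA hq] at h2
      have := Mt.det (FailAt.fail h2) ⟨_, hr⟩
      cases this
  | @branchFail B q q' q'' i r s s' hF hT hr1 hr2 ih1 ih2 =>
    intro X c t M hP hq hM
    cases hm : M (q, i) with
    | some v => exact ⟨_, _, _, .memoHit hm⟩
    | none =>
      have hL := (hWF.1 _ hP.mem_comps).2.2 _ hq hF
      rw [hT] at hL
      obtain ⟨M1, r1, n1, h1⟩ := ih1 hP hL.1 hM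
      by_cases he : r1 = .failure (X.nu q)
      · subst he
        have h2 := (memo_sound hWF h1 hP hL.1 hM).1
        obtain ⟨M2, r2, n2, h3⟩ := ih2 hP hL.2 h2
        cases r2 with
        | failure j => exact ⟨_, _, _, .branchBTFail hm hF hT h1 h3⟩
        | success => exact ⟨_, _, _, .branchBTOther hm hF hT h1 h3 (by simp)⟩
        | successAt m K => exact ⟨_, _, _, .branchBTOther hm hF hT h1 h3 (by simp)⟩
      · refine ⟨_, _, _, .branchNoBT hm hF hT h1 ?_⟩
        rintro j rfl rfl
        exact he rfl
  | @charSucc B q q' σ i r s hF hT hw _ ih =>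
    intro X c t M hP hq hM
    cases hm : M (q, i) with
    | some v => exact ⟨_, _, _, .memoHit hm⟩
    | none =>
      have hL := (hWF.1 _ hP.mem_comps).2.2 _ hq hF
      rw [hT] at hL
      obtain ⟨M1, r1, n1, h1⟩ := ih hP hL hM
      exact ⟨_, _, _, .charSucc hm hF hT hw h1⟩
  | @charFail B q q' σ i hF hT hw =>
    intro X c t M hP hq hM
    cases hm : M (q, i) with
    | some v => exact ⟨_, _, _, .memoHit hm⟩
    | none => exact ⟨_, _, _, .charFail hm hF hT hw⟩
  | @plaSucc B B' q q' i i' r s1 s2 hF hT hr1 hr2 ih1 ih2 =>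
    intro X c t M hP hq hM
    cases hm : M (q, i) with
    | some v => exact ⟨_, _, _, .memoHit hm⟩
    | none =>
      have hL := (hWF.1 _ hP.mem_comps).2.2 _ hq hF
      rw [hT] at hL
      have hP' := hP.pla hq hT
      have hL' := (hWF.1 _ hP'.mem_comps).1
      obtain ⟨M1, r1, n1, h1⟩ := ih1 hP' hL' hM
      obtain ⟨g1, g2⟩ := memo_sound hWF h1 hP' hL' hM
      cases r1 with
      | failure j => exact ⟨_, _, _, .plaFail hm hF hT h1⟩
      | success =>
        obtain ⟨M2, r2, n2, h3⟩ := ih2 hP hL g1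
        exact ⟨_, _, _, .plaBare hm hF hT h1 h3⟩
      | successAt m K =>
        obtain ⟨M2, r2, n2, h3⟩ := ih2 hP hL (g1.batch (K := K) (v := .success) hA (fun pk hpk => by
          obtain ⟨Bp, cp, k1, k2, k3⟩ := g2.2 pk hpk
          exact ⟨Bp, cp, k1, k2, rfl, k3.succTop_nil⟩))
        exact ⟨_, _, _, .plaSuccAt hm hF hT h1 h3⟩
  | @plaFail B B' q q' i s1 hF hT hr1 ih1 =>
    intro X c t M hP hq hM
    cases hm : M (q, i) with
    | some v => exact ⟨_, _, _, .memoHit hm⟩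
    | none =>
      have hP' := hP.pla hq hT
      have hL' := (hWF.1 _ hP'.mem_comps).1
      obtain ⟨M1, r1, n1, h1⟩ := ih1 hP' hL' hM
      obtain ⟨g1, g2⟩ := memo_sound hWF h1 hP' hL' hM
      cases r1 with
      | failure j => exact ⟨_, _, _, .plaFail hm hF hT h1⟩
      | success =>
        obtain ⟨_, m, h2⟩ := g2
        cases Mt.det h2 ⟨_, hr1⟩
      | successAt m K => cases Mt.det g2.1 ⟨_, hr1⟩
  | @atSucc B B' q q' i i' r s1 s2 hF hT hr1 hr2 ih1 ih2 =>
    intro X c t M hP hq hM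
    cases hm : M (q, i) with
    | some v => exact ⟨_, _, _, .memoHit hm⟩
    | none =>
      have hL := (hWF.1 _ hP.mem_comps).2.2 _ hq hF
      rw [hT] at hL
      have hP' := hP.grp hq hT
      have hL' := (hWF.1 _ hP'.mem_comps).1
      obtain ⟨M1, r1, n1, h1⟩ := ih1 hP' hL' hM
      obtain ⟨g1, g2⟩ := memo_sound hWF h1 hP' hL' hM
      cases r1 with
      | failure j =>
        rcases lt_or_ge (X.nu q) j with hj | hj
        · exact ⟨_, _, _, .atFailHigh hm hF hT h1 hj⟩
        · exact ⟨_, _, _, .atFailLow hm hF hT h1 hj⟩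
      | success => exact ⟨_, _, _, .atBare hm hF hT h1⟩
      | successAt m K =>
        cases Mt.det g2.1 ⟨_, hr1⟩
        obtain ⟨M2, r2, n2, h3⟩ := ih2 hP hL g1
        cases r2 with
        | failure j => exact ⟨_, _, _, .atSuccFail hm hF hT h1 h3⟩
        | success => exact ⟨_, _, _, .atSuccBare hm hF hT h1 h3⟩
        | successAt m' K' => exact ⟨_, _, _, .atSuccSucc hm hF hT h1 h3⟩
  | @atFail B B' q q' i s1 hF hT hr1 ih1 =>
    intro X c t M hP hq hM
    cases hm : M (q, i) with
    | some v => exact ⟨_, _, _, .memoHit hm⟩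
    | none =>
      have hP' := hP.grp hq hT
      have hL' := (hWF.1 _ hP'.mem_comps).1
      obtain ⟨M1, r1, n1, h1⟩ := ih1 hP' hL' hM
      obtain ⟨g1, g2⟩ := memo_sound hWF h1 hP' hL' hM
      cases r1 with
      | failure j =>
        rcases lt_or_ge (X.nu q) j with hj | hj
        · exact ⟨_, _, _, .atFailHigh hm hF hT h1 hj⟩
        · exact ⟨_, _, _, .atFailLow hm hF hT h1 hj⟩
      | success => exact ⟨_, _, _, .atBare hm hF hT h1⟩
      | successAt m K => cases Mt.det g2.1 ⟨_, hr1⟩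

/-- **Theorem 8** (correctness of the combined algorithm `Memo-(la,at)`): for every
(la,at)-NFA `A`, every input string `w`, and every position `i ∈ {0, …, |w|}`,
`Match-(la,at)_{A,w}(q0, i) = f(Memo-(la,at)^{M0}_{A,A,w}(q0, i))`, where `f` converts
results by `f(Failure(j)) = Failure` and `f(SuccessAt(i', K)) = SuccessAt(i')`
(a top-level call never returns the bare value `Success`). -/
theorem memoLaAt_correct {Sigma S : Type} [DecidableEq S]
    (A : SubNFA Sigma S) (hWF : A.WF) (hK : A.IsLaAtNFA) (hLoop : A.NoEpsLoops)
    (w : List Sigma) (i : ℕ) (hi : i ≤ w.length) :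
    (∀ {M' : S × ℕ → Option LaAtVal} {ra : LaAtResult S} {n : ℕ},
        MemoLaAtRun w A A A.q0 i (fun _ => none) M' ra n → ra ≠ LaAtResult.success) ∧
    ∀ r : Result,
      (∃ s, LAMatchRun w A A.q0 i r s) ↔
        (∃ (M' : S × ℕ → Option LaAtVal) (ra : LaAtResult S) (n : ℕ),
          MemoLaAtRun w A A A.q0 i (fun _ => none) M' ra n ∧
            ra.toResult? = some r) := by
  have hq0 : A.q0 ∈ A.Q := (hWF.1 _ (Place.root (A := A)).mem_comps).1
  have hM0 : Sound w A (fun _ => none) := by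
    intro X B c t q i v _ _ h
    cases h
  have key : ∀ {M' : S × ℕ → Option LaAtVal} {ra : LaAtResult S} {n : ℕ},
      MemoLaAtRun w A A A.q0 i (fun _ => none) M' ra n →
      ResOK w A A [] true A A.q0 i ra :=
    fun h => (memo_sound hWF h .root hq0 hM0).2
  have key2 : ∀ {M' : S × ℕ → Option LaAtVal} {ra : LaAtResult S} {n : ℕ},
      MemoLaAtRun w A A A.q0 i (fun _ => none) M' ra n →
      ∃ r, ra.toResult? = some r ∧ Mt w A A.q0 i r := by
    intro M' ra n h
    have h1 := key h
    cases ra with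
    | success => cases h1.1
    | failure j => exact ⟨_, rfl, h1.2⟩
    | successAt m K => exact ⟨_, rfl, h1.1⟩
  refine ⟨?_, ?_⟩
  · rintro M' ra n h rfl
    cases (key h).1
  · intro r
    constructor
    · rintro ⟨s, hs⟩
      obtain ⟨M', ra, n, h⟩ := memo_exists hWF hs .root hq0 hM0
      obtain ⟨r', h1, h2⟩ := key2 h
      obtain rfl := Mt.det h2 ⟨s, hs⟩
      exact ⟨M', ra, n, h, h1⟩
    · rintro ⟨M', ra, n, h, hr⟩
      obtain ⟨r', h1, h2⟩ := key2 h
      rw [hr] at h1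
      obtain rfl := Option.some.inj h1
      exact h2

end RegexMemo
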